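/- arXiv:2203.00405 — 3 statements merged into one kernel-verified Lean document; each statement's English description precedes it below -/
import Mathlib

section
/- Let (W,S) be a Coxeter system and k ∈ ℕ. Then the poset (W, ≤_{L^k}) is graded with rank function ℓ: for all u ≤_{L^k} v, every maximal chain of the interval [u,v] in (W, ≤_{L^k}) has length ℓ(v) − ℓ(u). In particular, if u <_{L^k} v there exists a chain u = x_0, x_1, …, x_n = v with n = ℓ(v) − ℓ(u), x_i x_{i-1}⁻¹ ∈ T_k and ℓ(x_i) = ℓ(x_{i-1}) + 1 for all i. -/
/-!
Formalization of definitions from "orders on Coxeter groups associated with sets of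
reflections" (k-intermediate orders, k-Bruhat graphs, k-absolute orders).

All definitions are parametrized by a length function `len : W → ℕ` and a set of
"reflections"; they are instantiated either with a `CoxeterSystem` (`cs.length` and
`cs.IsReflection`) or concretely with the symmetric group `Equiv.Perm (Fin n)`
(inversion number and transpositions).
-/

namespace KBruhatPaper

variable {W : Type*} [Group W]

/-- One step in the directed graph associated with `len` and the set `X ⊆ T`:
`v` is obtained from `u` by multiplying on the left by an element `t ∈ X`,
with `len u < len v`. -/
def Step (len : W → ℕ) (X : Set W) (u v : W) : Prop :=
  ∃ t ∈ X, v = t * u ∧ len u < len v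

/-- The partial order `≤_{L^X}`: `u ≤_{L^X} v` iff `u = v` or there are
`t₁, …, t_r ∈ X` with `len u < len (t₁ u) < ⋯ < len (t_r ⋯ t₁ u)` and
`t_r ⋯ t₁ u = v`.  For `X = T` (all reflections) this is the Bruhat order. -/
def leL (len : W → ℕ) (X : Set W) : W → W → Prop :=
  Relation.ReflTransGen (Step len X)

/-- The strict order `<_{L^X}`. -/
def ltL (len : W → ℕ) (X : Set W) (u v : W) : Prop :=
  leL len X u v ∧ u ≠ v

/-- The covering relation of the poset `(W, ≤_{L^X})`. -/
def CovL (len : W → ℕ) (X : Set W) (u v : W) : Prop :=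
  ltL len X u v ∧ ¬∃ w, ltL len X u w ∧ ltL len X w v

/-- `N(v) = {t ∈ T : len (t * v) < len v}`. -/
def NSet (len : W → ℕ) (T : Set W) (v : W) : Set W :=
  {t ∈ T | len (t * v) < len v}

/-- A reflection subgroup: a subgroup generated by a subset of `T`. -/
def IsReflSubgroup (T : Set W) (W' : Subgroup W) : Prop :=
  ∃ A ⊆ T, W' = Subgroup.closure A

/-- The canonical Coxeter generators `S' = {t ∈ T : N(t) ∩ W' = {t}}` of a
reflection subgroup `W'`. -/
def CanGens (len : W → ℕ) (T : Set W) (W' : Subgroup W) : Set W :=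
  {t ∈ T | NSet len T t ∩ (W' : Set W) = {t}}

/-- The relation `⊑'` on `T`: `t ⊑' t'` iff `t = t'` or there is a dihedral
reflection subgroup `W'` (i.e. with exactly two canonical generators) containing
`t` and `t'`, together with a directed path from `t` to `t'` in the Bruhat graph
restricted to `W'`. -/
def SqLe' (len : W → ℕ) (T : Set W) (t t' : W) : Prop :=
  t = t' ∨ ∃ W' : Subgroup W, IsReflSubgroup T W' ∧ t ∈ W' ∧ t' ∈ W' ∧
    (CanGens len T W').encard = 2 ∧
    ∃ (n : ℕ) (x : ℕ → W), x 0 = t ∧ x n = t' ∧ (∀ i ≤ n, x i ∈ W') ∧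
      ∀ i < n, x i * (x (i + 1))⁻¹ ∈ T ∧ ltL len T (x i) (x (i + 1))

/-- The relation `⊑` on `T`: the transitive closure of `⊑'`. -/
def SqLe (len : W → ℕ) (T : Set W) : W → W → Prop :=
  Relation.TransGen (SqLe' len T)

/-- `X ⊆ T` is an order ideal of `(T, ⊑)`. -/
def IsIdeal (len : W → ℕ) (T : Set W) (X : Set W) : Prop :=
  X ⊆ T ∧ ∀ t t', SqLe len T t t' → t' ∈ X → t ∈ X

/-- `PFactor len J w wup wJ` expresses that `w = w^J ⬝ w_J` is the (unique) parabolic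
factorization of `w` with respect to the set `J` of simple reflections:
`wup = w^J = P^J(w)` and `wJ = w_J ∈ W_J`. -/
def PFactor (len : W → ℕ) (J : Set W) (w wup wJ : W) : Prop :=
  wJ ∈ Subgroup.closure J ∧ (∀ s ∈ J, len wup < len (wup * s)) ∧
    w = wup * wJ ∧ len w = len wup + len wJ

/-- `QFactor len J w wJ wq` expresses that `w = w'_J ⬝ (ᴶw)` is the (unique) parabolic
factorization of `w` with respect to the set `J` of simple reflections:
`wJ = w'_J ∈ W_J` and `wq = ᴶw = Q^J(w)`. -/
def QFactor (len : W → ℕ) (J : Set W) (w wJ wq : W) : Prop :=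
  wJ ∈ Subgroup.closure J ∧ (∀ s ∈ J, len wq < len (s * wq)) ∧
    w = wJ * wq ∧ len w = len wJ + len wq

/-- A chain `e = x₀ → x₁ → ⋯ → x_r = w` of `r` steps in the directed graph with
steps from `X` (for `X = T_k`, a path from `e` to `w` in the `k`-Bruhat graph). -/
def ChainOfLen (len : W → ℕ) (X : Set W) (w : W) (r : ℕ) : Prop :=
  ∃ x : ℕ → W, x 0 = 1 ∧ x r = w ∧ ∀ i < r, Step len X (x i) (x (i + 1))

/-- `HasAbsLen len X w r` : `r` is the `X`-absolute length of `w`, i.e. the least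
number of steps from `X` needed to reach `w` from the identity (for `X = T_k`,
the distance from `e` to `w` in the `k`-Bruhat graph, `ℓ_k(w)`). -/
def HasAbsLen (len : W → ℕ) (X : Set W) (w : W) (r : ℕ) : Prop :=
  IsLeast {r | ChainOfLen len X w r} r

section CoxeterSystem

variable {B : Type*} {M : CoxeterMatrix B}

/-- The set `T` of reflections of a Coxeter system. -/
def TSet (cs : CoxeterSystem M W) : Set W := {t | cs.IsReflection t}

/-- The set `T_k = {t ∈ T : ℓ(t) ≤ 2k + 1}`. -/
def TkSet (cs : CoxeterSystem M W) (k : ℕ) : Set W :=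
  {t | cs.IsReflection t ∧ cs.length t ≤ 2 * k + 1}

/-- The `k`-intermediate order `≤_{L^k}` on `W`. -/
def leLk (cs : CoxeterSystem M W) (k : ℕ) : W → W → Prop :=
  leL cs.length (TkSet cs k)

/-- The strict `k`-intermediate order `<_{L^k}` on `W`. -/
def ltLk (cs : CoxeterSystem M W) (k : ℕ) : W → W → Prop :=
  ltL cs.length (TkSet cs k)

/-- The Bruhat order on `W`. -/
def bruhatLE (cs : CoxeterSystem M W) : W → W → Prop :=
  leL cs.length (TSet cs)

/-- The strict Bruhat order on `W`. -/
def bruhatLT (cs : CoxeterSystem M W) : W → W → Prop :=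
  ltL cs.length (TSet cs)

end CoxeterSystem

section SymmetricGroup

/-- The number of inversions of a permutation of `Fin n`; this is the Coxeter
length of the permutation with respect to the standard Coxeter presentation
of the symmetric group. -/
def invCount {n : ℕ} (w : Equiv.Perm (Fin n)) : ℕ :=
  (Finset.univ.filter fun p : Fin n × Fin n => p.1 < p.2 ∧ w p.2 < w p.1).card

/-- The set of transpositions: the reflections of the symmetric group. -/
def swaps (n : ℕ) : Set (Equiv.Perm (Fin n)) := {σ | σ.IsSwap}

/-- The set of simple transpositions `s_i = (i, i+1)`: the standard Coxeter
generators of the symmetric group. -/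
def simples (n : ℕ) : Set (Equiv.Perm (Fin n)) :=
  {σ | ∃ i j : Fin n, (i : ℕ) + 1 = (j : ℕ) ∧ σ = Equiv.swap i j}

/-- The set `T_k` for the symmetric group: transpositions of length at most `2k + 1`. -/
def swapsK (n k : ℕ) : Set (Equiv.Perm (Fin n)) :=
  {σ | σ.IsSwap ∧ invCount σ ≤ 2 * k + 1}

end SymmetricGroup

end KBruhatPaper

open KBruhatPaper

/-!
In the geometric representation a reflection `t` has a positive root `β`, and `ℓ(u) < ℓ(tu)` holds
iff `u⁻¹β` is nonnegative. That `w α_i` is nonnegative when `ℓ(w) < ℓ(w s_i)` is a rank-two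
computation: write `w` as `v` times an alternating word of length `p` in `s_i` and `s_j`, with `v`
minimal in its coset. The coefficients of `v α_i` and `v α_j` in `w α_i` are Chebyshev values
`sin ((q + 1) π / m) / sin (π / m)` with `q ≤ p < m`, or `q + 1` if `m = ∞`.

The theorem reduces to the claim that a step `u → tu` with `t ∈ T_k` can be refined to steps of
`T_k` raising the length by one. Induct on `k`: for a left descent `s ≠ t` of `t`, the reflection
`sts` is shorter than `t` by exactly two, so there is a refinement of `su → stu` inside `T_{k-1}`.
The maps `x ↦ max(x, sx)` and `x ↦ min(x, sx)` send such a chain to a chain inside `T_k`, since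
conjugation by `s` adds at most two to the length of a reflection. If `su < u`, then `stu < tu` by
the sign of roots and the first map gives the refinement; if `u < su`, the second does, up to a last
step along `s`.
-/

namespace KBruhatPaper

open Module Polynomial.Chebyshev Real Relation

section Sequences

lemma exists_seq_of_reflTransGen {α : Type*} {r : α → α → Prop} {a b : α}
    (h : ReflTransGen r a b) :
    ∃ (n : ℕ) (x : ℕ → α), x 0 = a ∧ x n = b ∧ ∀ i < n, r (x i) (x (i + 1)) := by
  induction h using ReflTransGen.head_induction_on with
  | refl => exact ⟨0, fun _ => b, rfl, rfl, by simp⟩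
  | @head a c hac _ ih =>
    obtain ⟨n, x, rfl, hxn, hx⟩ := ih
    refine ⟨n + 1, fun i => i.casesOn a x, rfl, hxn, ?_⟩
    rintro (_ | i) hi
    · exact hac
    · exact hx i (by lia)

lemma eq_add_of_forall_succ_eq_add_one {f : ℕ → ℕ} {n : ℕ}
    (h : ∀ i < n, f (i + 1) = f i + 1) : f n = f 0 + n := by
  induction n with
  | zero => rfl
  | succ n ih => rw [h n n.lt_succ_self, ih fun i hi => h i (by lia), add_assoc]

end Sequences

section Trigonometry

lemma eval_S_two_mul_cos_eq_zero {θ : ℝ} {n : ℤ} (hθ : sin θ ≠ 0) (h : sin ((n + 1) * θ) = 0) :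
    (S ℝ n).eval (2 * cos θ) = 0 := by
  rw [← S_two_mul_real_cos] at h
  exact (mul_eq_zero.mp h).resolve_right hθ

lemma eval_S_two_mul_cos_pi_div_nonneg {m : ℕ} (hm : m ≠ 1) {n : ℤ} (hn : -1 ≤ n)
    (hnm : m ≠ 0 → n + 1 ≤ m) : 0 ≤ (S ℝ n).eval (2 * cos (π / m)) := by
  have hn' : (0 : ℝ) ≤ n + 1 := by exact_mod_cast neg_le_iff_add_nonneg.mp hn
  rcases eq_or_ne m 0 with rfl | h0
  -- In a Coxeter matrix `m = 0` stands for `∞`, and `π / 0 = 0` is the right limiting angle.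
  · simpa [S_eval_two] using hn'
  have hm2 : (2 : ℝ) ≤ m := by exact_mod_cast (by lia : 2 ≤ m)
  have hnm' : (n + 1 : ℝ) ≤ m := by exact_mod_cast hnm h0
  have hsin : 0 < sin (π / m) :=
    sin_pos_of_pos_of_lt_pi (by positivity) (div_lt_self pi_pos (by linarith))
  have hsin_mul : 0 ≤ sin ((n + 1) * (π / m)) := by
    apply sin_nonneg_of_nonneg_of_le_pi (by positivity)
    calc (n + 1) * (π / m) ≤ m * (π / m) := by gcongr
      _ = π := by field_simp
  rw [← S_two_mul_real_cos] at hsin_mul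
  exact nonneg_of_mul_nonneg_left hsin_mul hsin

theorem reflection_mul_reflection_pow_eq_one {V : Type*} [AddCommGroup V] [Module ℝ V]
    {x y : V} {f g : Dual ℝ V} (hf : f x = 2) (hg : g y = 2) {m : ℕ} (hm : 3 ≤ m)
    (h : f y * g x = 4 * cos (π / m) ^ 2) : (reflection hf * reflection hg) ^ m = 1 := by
  have hm' : (3 : ℝ) ≤ m := by exact_mod_cast hm
  have hsin : sin (2 * (π / m)) ≠ 0 := by
    refine (sin_pos_of_pos_of_lt_pi (by positivity) ?_).ne'
    rw [← mul_div_assoc, div_lt_iff₀ (by linarith)]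
    nlinarith [pi_pos]
  ext z
  rw [reflection_mul_reflection_pow_apply hf hg m z (2 * cos (2 * (π / m)))
    (by rw [h, cos_two_mul]; ring), LinearEquiv.coe_one, id]
  obtain ⟨q, rfl | rfl⟩ := Nat.even_or_odd' m
  -- Every Chebyshev coefficient of the `m`-th power has the quantity in `hS` as a factor.
  · have hS : (S ℝ (q - 1)).eval (2 * cos (2 * (π / (2 * q : ℕ)))) = 0 := by
      refine eval_S_two_mul_cos_eq_zero hsin ?_
      have hq : (q : ℝ) ≠ 0 := by exact_mod_cast (by lia : q ≠ 0)
      convert sin_pi using 2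
      push_cast
      field_simp
      ring
    rw [show (((2 * q : ℕ) : ℤ) - 2) / 2 = q - 1 by lia,
      show (((2 * q : ℕ) : ℤ) - 1) / 2 = q - 1 by lia, hS]
    simp
  · have hS : (S ℝ q).eval (2 * cos (2 * (π / (2 * q + 1 : ℕ)))) +
        (S ℝ (q - 1)).eval (2 * cos (2 * (π / (2 * q + 1 : ℕ)))) = 0 := by
      refine (mul_eq_zero.mp ?_).resolve_right hsin
      rw [add_mul, S_two_mul_real_cos, S_two_mul_real_cos, add_eq_zero_iff_eq_neg,
        ← sin_sub_two_pi, ← sin_neg]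
      congr 1
      push_cast
      field_simp
      ring
    rw [show (((2 * q + 1 : ℕ) : ℤ) - 1) / 2 = q by lia,
      show (((2 * q + 1 : ℕ) : ℤ) - 3) / 2 = q - 1 by lia,
      show (((2 * q + 1 : ℕ) : ℤ)) / 2 = q by lia,
      show (((2 * q + 1 : ℕ) : ℤ) - 2) / 2 = q - 1 by lia, hS]
    simp

end Trigonometry

variable {B : Type*} {M : CoxeterMatrix B} {W : Type*} [Group W] (cs : CoxeterSystem M W)

local prefix:100 "s" => cs.simple
local prefix:100 "ℓ" => cs.length

noncomputable section GeometricRepresentation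

variable (M)

/-- The Cartan matrix `-2 cos (π / m(i, j))` of a Coxeter matrix. Mathlib encodes `m(i, j) = ∞` as
`0`, so that the entry is then `-2`. -/
def cartanEntry (i j : B) : ℝ := -(2 * cos (π / M i j))

/-- The simple root `α_i`, a basis vector of the geometric representation. -/
def simpleRoot (i : B) : B →₀ ℝ := Finsupp.single i 1

/-- The simple coroot `α_i^∨`: the linear form whose value at `α_j` is the `(i, j)` Cartan entry. -/
def simpleCoroot (i : B) : Dual ℝ (B →₀ ℝ) := Finsupp.linearCombination ℝ (cartanEntry M i)

lemma cartanEntry_comm (i j : B) : cartanEntry M i j = cartanEntry M j i := by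
  simp only [cartanEntry, M.symmetric i j]

lemma cartanEntry_self (i : B) : cartanEntry M i i = 2 := by simp [cartanEntry]

lemma simpleRoot_nonneg (i : B) : 0 ≤ simpleRoot i :=
  Finsupp.single_nonneg.mpr zero_le_one

lemma simpleRoot_ne_zero (i : B) : simpleRoot i ≠ 0 := by simp [simpleRoot]

@[simp] lemma simpleRoot_apply_self (i : B) : simpleRoot i i = 1 := by simp [simpleRoot]

lemma simpleRoot_apply_of_ne {i k : B} (h : k ≠ i) : simpleRoot i k = 0 := by
  simp [simpleRoot, h]

@[simp] lemma simpleCoroot_simpleRoot (i j : B) :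
    simpleCoroot M i (simpleRoot j) = cartanEntry M i j := by
  simp [simpleCoroot, simpleRoot]

lemma simpleCoroot_simpleRoot_self (i : B) : simpleCoroot M i (simpleRoot i) = 2 := by
  rw [simpleCoroot_simpleRoot, cartanEntry_self]

/-- The action `v ↦ v - ⟨α_i^∨, v⟩ α_i` of a simple generator on the geometric representation. -/
def simpleReflection (i : B) : (B →₀ ℝ) ≃ₗ[ℝ] (B →₀ ℝ) :=
  reflection (simpleCoroot_simpleRoot_self M i)

lemma simpleReflection_apply (i : B) (v : B →₀ ℝ) :
    simpleReflection M i v = v - simpleCoroot M i v • simpleRoot i :=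
  reflection_apply _ _

theorem isLiftable_simpleReflection : M.IsLiftable (simpleReflection M) := by
  intro i j
  rcases eq_or_ne i j with rfl | hij
  · rw [M.diagonal, pow_one]
    ext1 v
    exact involutive_reflection (simpleCoroot_simpleRoot_self M i) v
  rcases (by have := M.off_diagonal i j hij; lia : M i j = 0 ∨ M i j = 2 ∨ 3 ≤ M i j) with
    h0 | h2 | h3
  · rw [h0, pow_zero]
  · have hij : cartanEntry M i j = 0 := by simp [cartanEntry, h2]
    have hji : cartanEntry M j i = 0 := by rw [cartanEntry_comm, hij]
    ext1 v
    simp only [h2, pow_two, LinearEquiv.mul_apply, simpleReflection_apply, map_sub, map_smul,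
      simpleCoroot_simpleRoot, cartanEntry_self, hij, hji, LinearEquiv.coe_one, id]
    module
  · apply reflection_mul_reflection_pow_eq_one _ _ h3
    rw [simpleCoroot_simpleRoot, simpleCoroot_simpleRoot, cartanEntry_comm M j i, cartanEntry]
    ring

variable {M}

/-- The geometric (Tits) representation of a Coxeter group on the span of the simple roots. A vector
is nonnegative for the pointwise order of `B →₀ ℝ` iff it is a nonnegative combination of simple
roots. -/
def geomRep : W →* ((B →₀ ℝ) ≃ₗ[ℝ] (B →₀ ℝ)) :=
  cs.lift ⟨simpleReflection M, isLiftable_simpleReflection M⟩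

lemma geomRep_simple_apply (i : B) (v : B →₀ ℝ) :
    geomRep cs (s i) v = v - simpleCoroot M i v • simpleRoot i := by
  rw [geomRep, cs.lift_apply_simple, simpleReflection_apply]

lemma geomRep_simple_apply_apply_of_ne {i k : B} (h : k ≠ i) (v : B →₀ ℝ) :
    geomRep cs (s i) v k = v k := by
  simp [geomRep_simple_apply, simpleRoot_apply_of_ne h]

lemma geomRep_mul_apply (u w : W) (v : B →₀ ℝ) :
    geomRep cs (u * w) v = geomRep cs u (geomRep cs w v) := by
  rw [map_mul, LinearEquiv.mul_apply]

@[simp] lemma geomRep_one_apply (v : B →₀ ℝ) : geomRep cs 1 v = v := by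
  rw [map_one, LinearEquiv.coe_one, id]

lemma geomRep_mul_simple_simpleRoot (w : W) (i : B) :
    geomRep cs (w * s i) (simpleRoot i) = -geomRep cs w (simpleRoot i) := by
  rw [geomRep_mul_apply, geomRep_simple_apply, simpleCoroot_simpleRoot_self, ← map_neg]
  congr 1
  module

lemma geomRep_simpleRoot_ne_zero (w : W) (i : B) : geomRep cs w (simpleRoot i) ≠ 0 :=
  (LinearEquiv.map_ne_zero_iff _).mpr (simpleRoot_ne_zero i)

lemma geomRep_alternatingWord_simpleRoot (i j : B) (p : ℕ) :
    geomRep cs (cs.wordProd (CoxeterSystem.alternatingWord i j p)) (simpleRoot i) =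
      (S ℝ p).eval (2 * cos (π / M i j)) • simpleRoot (if Even p then i else j) +
        (S ℝ (p - 1)).eval (2 * cos (π / M i j)) • simpleRoot (if Even p then j else i) := by
  induction p with
  | zero => simp [CoxeterSystem.alternatingWord]
  | succ p ih =>
    have hji : cartanEntry M j i = -(2 * cos (π / M i j)) := by rw [cartanEntry_comm, cartanEntry]
    have hij : cartanEntry M i j = -(2 * cos (π / M i j)) := rfl
    rw [CoxeterSystem.alternatingWord_succ', cs.wordProd_cons, geomRep_mul_apply, ih,
      geomRep_simple_apply, Nat.cast_succ, add_sub_cancel_right, S_add_one]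
    simp only [Polynomial.eval_sub, Polynomial.eval_mul, Polynomial.eval_X]
    by_cases hp : Even p <;>
    · simp only [hp, Nat.even_add_one, not_true, not_false_iff, if_true, if_false, map_add,
        map_smul, simpleCoroot_simpleRoot, cartanEntry_self, hij, hji, smul_eq_mul]
      module

theorem exists_eq_mul_alternatingWord (w : W) {i : B} (j : B) (hi : ¬cs.IsRightDescent w i) :
    ∃ v p, w = v * cs.wordProd (CoxeterSystem.alternatingWord i j p) ∧ ℓ w = ℓ v + p ∧
      ¬cs.IsRightDescent v i ∧ ¬cs.IsRightDescent v j := by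
  induction hn : ℓ w using Nat.strong_induction_on generalizing w i j with
  | _ n ih =>
  by_cases hj : cs.IsRightDescent w j
  · have hlt : ℓ(w * s j) < n := hn ▸ hj
    obtain ⟨v, p, hw, hlen, hvj, hvi⟩ :=
      ih _ hlt (w * s j) i (cs.isRightDescent_iff_not_isRightDescent_mul.mp hj) rfl
    refine ⟨v, p + 1, ?_, ?_, hvi, hvj⟩
    · rw [CoxeterSystem.alternatingWord_succ, cs.wordProd_concat, ← mul_assoc, ← hw,
        cs.simple_mul_simple_cancel_right]
    · have := cs.isRightDescent_iff.mp hj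
      lia
  · exact ⟨w, 0, by simp [CoxeterSystem.alternatingWord], by lia, hi, hj⟩

lemma lt_of_not_isRightDescent_mul_alternatingWord {v : W} {i j : B} {p : ℕ} (hM : M i j ≠ 0)
    (hlen : ℓ(v * cs.wordProd (CoxeterSystem.alternatingWord i j p)) = ℓ v + p)
    (hi : ¬cs.IsRightDescent (v * cs.wordProd (CoxeterSystem.alternatingWord i j p)) i) :
    p < M i j := by
  by_contra! hle
  have hM' : M j i = M i j := M.symmetric j i
  apply cs.not_isReduced_alternatingWord j i (hM' ▸ hM) (m := p + 1) (by lia)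
  have hup := cs.not_isRightDescent_iff.mp hi
  rw [mul_assoc, ← cs.wordProd_concat, ← CoxeterSystem.alternatingWord_succ, hlen] at hup
  have hword := cs.length_wordProd_le (CoxeterSystem.alternatingWord j i (p + 1))
  have hmul := cs.length_mul_le v (cs.wordProd (CoxeterSystem.alternatingWord j i (p + 1)))
  rw [CoxeterSystem.IsReduced]
  rw [CoxeterSystem.length_alternatingWord] at hword ⊢
  lia

theorem geomRep_simpleRoot_nonneg {w : W} {i : B} (hi : ¬cs.IsRightDescent w i) :
    0 ≤ geomRep cs w (simpleRoot i) := by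
  induction hn : ℓ w using Nat.strong_induction_on generalizing w i with
  | _ n ih =>
  rcases eq_or_ne w 1 with rfl | hw
  · simpa using simpleRoot_nonneg i
  obtain ⟨j, hj⟩ := cs.exists_rightDescent_of_ne_one hw
  have hij : i ≠ j := by
    rintro rfl
    exact hi hj
  obtain ⟨v, p, rfl, hlen, hvi, hvj⟩ := exists_eq_mul_alternatingWord cs w j hi
  have hp : p ≠ 0 := by
    rintro rfl
    exact hvj (by simpa [CoxeterSystem.alternatingWord] using hj)
  have hpM (h0 : M i j ≠ 0) : p < M i j :=
    lt_of_not_isRightDescent_mul_alternatingWord cs h0 hlen hi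
  have hM1 : M i j ≠ 1 := M.off_diagonal i j hij
  have hvi' : 0 ≤ geomRep cs v (simpleRoot i) := ih _ (by lia) hvi rfl
  have hvj' : 0 ≤ geomRep cs v (simpleRoot j) := ih _ (by lia) hvj rfl
  have hcoef {n : ℤ} (hn : -1 ≤ n) (hnp : n ≤ p) :
      0 ≤ (S ℝ n).eval (2 * cos (π / M i j)) :=
    eval_S_two_mul_cos_pi_div_nonneg hM1 hn fun h0 => by have := hpM h0; lia
  rw [geomRep_mul_apply, geomRep_alternatingWord_simpleRoot, map_add, map_smul, map_smul]
  refine add_nonneg (smul_nonneg (hcoef (by lia) (by lia)) ?_)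
    (smul_nonneg (hcoef (by lia) (by lia)) ?_) <;>
  split_ifs <;> assumption

theorem geomRep_simpleRoot_nonpos {w : W} {i : B} (hi : cs.IsRightDescent w i) :
    geomRep cs w (simpleRoot i) ≤ 0 := by
  have h := geomRep_simpleRoot_nonneg cs (cs.isRightDescent_iff_not_isRightDescent_mul.mp hi)
  rwa [geomRep_mul_simple_simpleRoot, neg_nonneg] at h

lemma geomRep_simpleRoot_nonneg_or_nonpos (w : W) (i : B) :
    0 ≤ geomRep cs w (simpleRoot i) ∨ geomRep cs w (simpleRoot i) ≤ 0 :=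
  (em (cs.IsRightDescent w i)).symm.imp (geomRep_simpleRoot_nonneg cs)
    (geomRep_simpleRoot_nonpos cs)

lemma isRightDescent_iff_geomRep_nonpos {w : W} {i : B} :
    cs.IsRightDescent w i ↔ geomRep cs w (simpleRoot i) ≤ 0 := by
  refine ⟨geomRep_simpleRoot_nonpos cs, fun h => ?_⟩
  by_contra hi
  exact geomRep_simpleRoot_ne_zero cs w i (le_antisymm h (geomRep_simpleRoot_nonneg cs hi))

lemma isLeftDescent_iff_geomRep_inv_nonpos {w : W} {i : B} :
    cs.IsLeftDescent w i ↔ geomRep cs w⁻¹ (simpleRoot i) ≤ 0 := by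
  rw [← cs.isRightDescent_inv_iff, isRightDescent_iff_geomRep_nonpos]

lemma eq_one_of_geomRep_simpleRoot_nonneg {w : W}
    (h : ∀ i, 0 ≤ geomRep cs w (simpleRoot i)) : w = 1 := by
  by_contra hw
  obtain ⟨i, hi⟩ := cs.exists_rightDescent_of_ne_one hw
  exact geomRep_simpleRoot_ne_zero cs w i (le_antisymm (geomRep_simpleRoot_nonpos cs hi) (h i))

lemma simple_conj_mul_simple_mul (t u : W) (j : B) :
    s j * t * s j * (s j * u) = s j * (t * u) := by
  simp [mul_assoc]

section PositiveRoots

/-- `β` is the positive root of the reflection `t`: it is nonnegative and, for some `w` and `i`, the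
reflection is `w s_i w⁻¹` and `β = w α_i`. -/
def IsPositiveRootOf (t : W) (β : B →₀ ℝ) : Prop :=
  ∃ w i, t = w * s i * w⁻¹ ∧ β = geomRep cs w (simpleRoot i) ∧ 0 ≤ β

variable {cs}

theorem exists_isPositiveRootOf {t : W} (ht : cs.IsReflection t) :
    ∃ β, IsPositiveRootOf cs t β := by
  obtain ⟨w, i, rfl⟩ := ht
  rcases geomRep_simpleRoot_nonneg_or_nonpos cs w i with h | h
  · exact ⟨_, w, i, rfl, rfl, h⟩
  · refine ⟨_, w * s i, i, by simp [mul_assoc], rfl, ?_⟩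
    rwa [geomRep_mul_simple_simpleRoot, neg_nonneg]

namespace IsPositiveRootOf

variable {t u : W} {β : B →₀ ℝ} {j : B}

lemma nonneg (h : IsPositiveRootOf cs t β) : 0 ≤ β :=
  h.choose_spec.choose_spec.2.2

lemma isReflection (h : IsPositiveRootOf cs t β) : cs.IsReflection t := by
  obtain ⟨w, i, rfl, -⟩ := h
  exact ⟨w, i, rfl⟩

lemma geomRep_ne_zero (h : IsPositiveRootOf cs t β) (g : W) : geomRep cs g β ≠ 0 := by
  obtain ⟨w, i, -, rfl, -⟩ := h
  rw [← geomRep_mul_apply]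
  exact geomRep_simpleRoot_ne_zero cs _ i

lemma geomRep_nonneg_or_nonpos (h : IsPositiveRootOf cs t β) (g : W) :
    0 ≤ geomRep cs g β ∨ geomRep cs g β ≤ 0 := by
  obtain ⟨w, i, -, rfl, -⟩ := h
  rw [← geomRep_mul_apply]
  exact geomRep_simpleRoot_nonneg_or_nonpos cs _ i

lemma exists_geomRep_eq_sub_smul (h : IsPositiveRootOf cs t β) (v : B →₀ ℝ) :
    ∃ c : ℝ, geomRep cs t v = v - c • β := by
  obtain ⟨w, i, rfl, rfl, -⟩ := h
  refine ⟨simpleCoroot M i (geomRep cs w⁻¹ v), ?_⟩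
  rw [geomRep_mul_apply, geomRep_mul_apply, geomRep_simple_apply, map_sub, map_smul,
    ← geomRep_mul_apply, mul_inv_cancel, geomRep_one_apply]

lemma geomRep_self (h : IsPositiveRootOf cs t β) : geomRep cs t β = -β := by
  obtain ⟨w, i, rfl, rfl, -⟩ := h
  rw [← geomRep_mul_apply, inv_mul_cancel_right, geomRep_mul_simple_simpleRoot]

theorem eq_simple_of_forall_ne (h : IsPositiveRootOf cs t β) (hβ : ∀ k ≠ j, β k = 0) :
    t = s j := by
  suffices t * s j = 1 by rwa [mul_eq_one_iff_eq_inv, cs.inv_simple] at this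
  have hβj : β = β j • simpleRoot j := by
    ext k
    rcases eq_or_ne k j with rfl | hk
    · simp
    · simp [hβ k hk, simpleRoot_apply_of_ne hk]
  have hβj_ne : β j ≠ 0 := fun h0 => h.geomRep_ne_zero 1 (by rw [hβj, h0, zero_smul, map_zero])
  have htj : geomRep cs t (simpleRoot j) = -simpleRoot j := by
    have hself := h.geomRep_self
    rw [hβj, map_smul, ← smul_neg] at hself
    exact smul_right_injective _ hβj_ne hself
  refine eq_one_of_geomRep_simpleRoot_nonneg cs fun k => ?_
  rcases eq_or_ne k j with rfl | hk
  · rw [geomRep_mul_simple_simpleRoot, htj, neg_neg]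
    exact simpleRoot_nonneg k
  · refine (geomRep_simpleRoot_nonneg_or_nonpos cs _ k).resolve_right fun hneg => ?_
    obtain ⟨c, hc⟩ := h.exists_geomRep_eq_sub_smul (geomRep cs (s j) (simpleRoot k))
    have hk' := hneg k
    rw [geomRep_mul_apply, hc, Finsupp.sub_apply, Finsupp.smul_apply, hβ k hk,
      geomRep_simple_apply_apply_of_ne cs hk] at hk'
    norm_num at hk'

theorem conj_simple (h : IsPositiveRootOf cs t β) (htj : t ≠ s j) :
    IsPositiveRootOf cs (s j * t * s j) (geomRep cs (s j) β) := by
  have hpos : 0 ≤ geomRep cs (s j) β := by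
    refine (h.geomRep_nonneg_or_nonpos _).resolve_right fun hneg => htj ?_
    refine h.eq_simple_of_forall_ne fun k hk => le_antisymm ?_ (h.nonneg k)
    simpa [geomRep_simple_apply_apply_of_ne cs hk] using hneg k
  obtain ⟨w, i, rfl, rfl, -⟩ := h
  exact ⟨s j * w, i, by simp [mul_assoc], (geomRep_mul_apply cs _ _ _).symm, hpos⟩

theorem length_mul_lt_of_geomRep_inv_nonpos (h : IsPositiveRootOf cs t β)
    (hu : geomRep cs u⁻¹ β ≤ 0) : ℓ(t * u) < ℓ u := by
  induction hn : ℓ u using Nat.strong_induction_on generalizing t u β with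
  | _ n ih =>
  have hu1 : u ≠ 1 := by
    rintro rfl
    rw [inv_one] at hu
    exact h.geomRep_ne_zero 1 (le_antisymm hu (by simpa using h.nonneg))
  obtain ⟨j, hj⟩ := cs.exists_leftDescent_of_ne_one hu1
  rw [← hn]
  rcases eq_or_ne t (s j) with rfl | htj
  · exact hj
  have hlt : ℓ(s j * t * s j * (s j * u)) < ℓ(s j * u) := by
    refine ih _ (hn ▸ hj) (h.conj_simple htj) ?_ rfl
    rwa [← geomRep_mul_apply, mul_inv_rev, inv_mul_cancel_right]
  rw [simple_conj_mul_simple_mul] at hlt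
  have := cs.length_simple_mul (t * u) j
  have := cs.isLeftDescent_iff.mp hj
  lia

theorem length_lt_length_mul_iff (h : IsPositiveRootOf cs t β) :
    ℓ u < ℓ(t * u) ↔ 0 ≤ geomRep cs u⁻¹ β := by
  constructor
  · intro hlt
    by_contra hneg
    exact hlt.not_gt (h.length_mul_lt_of_geomRep_inv_nonpos
      ((h.geomRep_nonneg_or_nonpos _).resolve_left hneg))
  · intro hpos
    have hneg : geomRep cs (t * u)⁻¹ β ≤ 0 := by
      rwa [mul_inv_rev, h.isReflection.inv, geomRep_mul_apply, h.geomRep_self, map_neg, neg_nonpos]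
    simpa [← mul_assoc, h.isReflection.mul_self] using h.length_mul_lt_of_geomRep_inv_nonpos hneg

theorem exists_geomRep_simpleRoot_eq_sub_smul_of_isLeftDescent (h : IsPositiveRootOf cs t β)
    (hj : cs.IsLeftDescent t j) :
    ∃ c : ℝ, 0 < c ∧ geomRep cs t (simpleRoot j) = simpleRoot j - c • β := by
  obtain ⟨c, hc⟩ := h.exists_geomRep_eq_sub_smul (simpleRoot j)
  refine ⟨c, ?_, hc⟩
  have hneg := (isLeftDescent_iff_geomRep_inv_nonpos cs).mp hj j
  rw [h.isReflection.inv, hc] at hneg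
  have hc1 : 1 ≤ c * β j := by simpa using hneg
  exact pos_of_mul_pos_left (by linarith) (h.nonneg j)

end IsPositiveRootOf

end PositiveRoots

end GeometricRepresentation

section Reflections

variable {cs} {t u : W} {j : B}

theorem length_simple_mul_lt_of_length_lt (ht : cs.IsReflection t) (htj : t ≠ s j)
    (hu : ℓ u < ℓ(t * u)) : ℓ(s j * u) < ℓ(s j * (t * u)) := by
  obtain ⟨β, h⟩ := exists_isPositiveRootOf ht
  have hpos := h.length_lt_length_mul_iff.mp hu
  rw [← simple_conj_mul_simple_mul, (h.conj_simple htj).length_lt_length_mul_iff]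
  rwa [← geomRep_mul_apply, mul_inv_rev, inv_mul_cancel_right]

theorem isRightDescent_simple_mul (ht : cs.IsReflection t) (htj : t ≠ s j)
    (hj : cs.IsLeftDescent t j) : cs.IsRightDescent (s j * t) j := by
  obtain ⟨β, h⟩ := exists_isPositiveRootOf ht
  obtain ⟨c, hc, htα⟩ := h.exists_geomRep_simpleRoot_eq_sub_smul_of_isLeftDescent hj
  by_contra hdesc
  have hpos := geomRep_simpleRoot_nonneg cs hdesc
  -- Away from the coordinate `j`, the vector `s_j t α_j` agrees with `-c β`, so `β` vanishes there.
  refine htj (h.eq_simple_of_forall_ne fun k hk => le_antisymm ?_ (h.nonneg k))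
  have hk' := hpos k
  rw [geomRep_mul_apply, geomRep_simple_apply_apply_of_ne cs hk, htα, Finsupp.sub_apply,
    simpleRoot_apply_of_ne hk] at hk'
  have hcβ : c * β k ≤ 0 := by simpa using hk'
  exact nonpos_of_mul_nonpos_right hcβ hc

theorem length_simple_mul_mul_simple_add_two (ht : cs.IsReflection t) (htj : t ≠ s j)
    (hj : cs.IsLeftDescent t j) : ℓ(s j * t * s j) + 2 = ℓ t := by
  have hleft := cs.isLeftDescent_iff.mp hj
  have hright := cs.isRightDescent_iff.mp (isRightDescent_simple_mul ht htj hj)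
  lia

theorem isLeftDescent_mul_of_isLeftDescent (ht : cs.IsReflection t) (htj : cs.IsLeftDescent t j)
    (hu : ℓ u < ℓ(t * u)) (huj : cs.IsLeftDescent u j) : cs.IsLeftDescent (t * u) j := by
  obtain ⟨β, h⟩ := exists_isPositiveRootOf ht
  obtain ⟨c, hc, htα⟩ := h.exists_geomRep_simpleRoot_eq_sub_smul_of_isLeftDescent htj
  have hβ := h.length_lt_length_mul_iff.mp hu
  have hα := (isLeftDescent_iff_geomRep_inv_nonpos cs).mp huj
  rw [isLeftDescent_iff_geomRep_inv_nonpos, mul_inv_rev, ht.inv, geomRep_mul_apply, htα, map_sub,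
    map_smul, sub_nonpos]
  exact hα.trans (smul_nonneg hc.le hβ)

end Reflections

section SaturatedChains

/-- A step `x → t x` with `t ∈ T_k` that raises the length by exactly one. -/
def UnitStep (k : ℕ) (x y : W) : Prop :=
  ∃ t ∈ TkSet cs k, y = t * x ∧ ℓ y = ℓ x + 1

/-- The longer of the two elements `x` and `s_j x`. -/
noncomputable def simpleMax (j : B) (x : W) : W := if ℓ(s j * x) < ℓ x then x else s j * x

/-- The shorter of the two elements `x` and `s_j x`. -/
noncomputable def simpleMin (j : B) (x : W) : W := if ℓ(s j * x) < ℓ x then s j * x else x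

variable {cs} {k : ℕ} {t u x y z : W} {j : B}

lemma simpleMax_of_isLeftDescent (hx : cs.IsLeftDescent x j) : simpleMax cs j x = x := if_pos hx

lemma simpleMax_of_not_isLeftDescent (hx : ¬cs.IsLeftDescent x j) :
    simpleMax cs j x = s j * x := if_neg hx

lemma simpleMin_of_isLeftDescent (hx : cs.IsLeftDescent x j) :
    simpleMin cs j x = s j * x := if_pos hx

lemma simpleMin_of_not_isLeftDescent (hx : ¬cs.IsLeftDescent x j) : simpleMin cs j x = x :=
  if_neg hx

lemma isLeftDescent_simple_mul_iff : cs.IsLeftDescent (s j * x) j ↔ ¬cs.IsLeftDescent x j := by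
  rw [cs.isLeftDescent_iff_not_isLeftDescent_mul, cs.simple_mul_simple_cancel_left]

lemma simpleMax_simple_mul (j : B) (x : W) : simpleMax cs j (s j * x) = simpleMax cs j x := by
  by_cases hx : cs.IsLeftDescent x j
  · rw [simpleMax_of_not_isLeftDescent (by rwa [isLeftDescent_simple_mul_iff, not_not]),
      simpleMax_of_isLeftDescent hx, cs.simple_mul_simple_cancel_left]
  · rw [simpleMax_of_isLeftDescent (isLeftDescent_simple_mul_iff.mpr hx),
      simpleMax_of_not_isLeftDescent hx]

lemma simpleMin_simple_mul (j : B) (x : W) : simpleMin cs j (s j * x) = simpleMin cs j x := by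
  by_cases hx : cs.IsLeftDescent x j
  · rw [simpleMin_of_not_isLeftDescent (by rwa [isLeftDescent_simple_mul_iff, not_not]),
      simpleMin_of_isLeftDescent hx]
  · rw [simpleMin_of_isLeftDescent (isLeftDescent_simple_mul_iff.mpr hx),
      simpleMin_of_not_isLeftDescent hx, cs.simple_mul_simple_cancel_left]

lemma unitStep_simple_mul (k : ℕ) (hx : ¬cs.IsLeftDescent x j) : UnitStep cs k x (s j * x) :=
  ⟨s j, ⟨cs.isReflection_simple j, by simp⟩, rfl, cs.not_isLeftDescent_iff.mp hx⟩

lemma unitStep_of_isLeftDescent (k : ℕ) (hx : cs.IsLeftDescent x j) :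
    UnitStep cs k (s j * x) x := by
  simpa using unitStep_simple_mul k (isLeftDescent_simple_mul_iff.not.mpr (not_not.mpr hx))

lemma reflTransGen_unitStep_simpleMin_self (k : ℕ) (j : B) (x : W) :
    ReflTransGen (UnitStep cs k) (simpleMin cs j x) x := by
  by_cases hx : cs.IsLeftDescent x j
  · rw [simpleMin_of_isLeftDescent hx]
    exact .single (unitStep_of_isLeftDescent k hx)
  · rw [simpleMin_of_not_isLeftDescent hx]

namespace UnitStep

lemma length_eq (h : UnitStep cs k y z) : ℓ z = ℓ y + 1 :=
  h.choose_spec.2.2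

lemma succ (h : UnitStep cs k y z) : UnitStep cs (k + 1) y z := by
  obtain ⟨t, ⟨ht, htk⟩, hz, hlen⟩ := h
  exact ⟨t, ⟨ht, by lia⟩, hz, hlen⟩

lemma simple_mul (h : UnitStep cs k y z) (hlen : ℓ(s j * z) = ℓ(s j * y) + 1) :
    UnitStep cs (k + 1) (s j * y) (s j * z) := by
  obtain ⟨t, ⟨ht, htk⟩, rfl, -⟩ := h
  refine ⟨s j * t * s j, ⟨?_, ?_⟩, (simple_conj_mul_simple_mul cs t y j).symm, hlen⟩
  · simpa using ht.conj (s j)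
  · have hright := cs.length_mul_le (s j * t) (s j)
    have hleft := cs.length_mul_le (s j) t
    rw [cs.length_simple] at hright hleft
    lia

lemma eq_simple_mul (h : UnitStep cs k y z) (hy : ¬cs.IsLeftDescent y j)
    (hz : cs.IsLeftDescent z j) : z = s j * y := by
  obtain ⟨t, ⟨ht, -⟩, rfl, hlen⟩ := h
  by_contra hne
  have htj : t ≠ s j := fun htj => hne (by rw [htj])
  have hlt := length_simple_mul_lt_of_length_lt ht htj (u := y) (by lia)
  rw [cs.not_isLeftDescent_iff] at hy
  rw [cs.isLeftDescent_iff] at hz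
  lia

theorem reflTransGen_simpleMax (h : UnitStep cs k y z) (j : B) :
    ReflTransGen (UnitStep cs (k + 1)) (simpleMax cs j y) (simpleMax cs j z) := by
  have hlen := h.length_eq
  by_cases hy : cs.IsLeftDescent y j <;> by_cases hz : cs.IsLeftDescent z j
  · rw [simpleMax_of_isLeftDescent hy, simpleMax_of_isLeftDescent hz]
    exact .single h.succ
  · rw [simpleMax_of_isLeftDescent hy, simpleMax_of_not_isLeftDescent hz]
    exact .tail (.single h.succ) (unitStep_simple_mul _ hz)
  · rw [h.eq_simple_mul hy hz, simpleMax_simple_mul]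
  · rw [simpleMax_of_not_isLeftDescent hy, simpleMax_of_not_isLeftDescent hz]
    rw [cs.not_isLeftDescent_iff] at hy hz
    exact .single (h.simple_mul (by lia))

theorem reflTransGen_simpleMin (h : UnitStep cs k y z) (j : B) :
    ReflTransGen (UnitStep cs (k + 1)) (simpleMin cs j y) (simpleMin cs j z) := by
  have hlen := h.length_eq
  by_cases hy : cs.IsLeftDescent y j <;> by_cases hz : cs.IsLeftDescent z j
  · rw [simpleMin_of_isLeftDescent hy, simpleMin_of_isLeftDescent hz]
    rw [cs.isLeftDescent_iff] at hy hz
    exact .single (h.simple_mul (by lia))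
  · rw [simpleMin_of_isLeftDescent hy, simpleMin_of_not_isLeftDescent hz]
    exact .tail (.single (unitStep_of_isLeftDescent _ hy)) h.succ
  · rw [h.eq_simple_mul hy hz, simpleMin_simple_mul]
  · rw [simpleMin_of_not_isLeftDescent hy, simpleMin_of_not_isLeftDescent hz]
    exact .single h.succ

lemma ltL (h : UnitStep cs k x y) : ltL cs.length (TkSet cs k) x y := by
  obtain ⟨t, ht, hy, hlen⟩ := h
  refine ⟨.single ⟨t, ht, hy, by lia⟩, ?_⟩
  rintro rfl
  lia

end UnitStep

theorem reflTransGen_unitStep_mul_of_simple_mul (ht : cs.IsReflection t)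
    (hj : cs.IsLeftDescent t j) (hu : ℓ u < ℓ(t * u))
    (h : ReflTransGen (UnitStep cs k) (s j * u) (s j * (t * u))) :
    ReflTransGen (UnitStep cs (k + 1)) u (t * u) := by
  by_cases huj : cs.IsLeftDescent u j
  · have hmax : ReflTransGen (UnitStep cs (k + 1)) (simpleMax cs j (s j * u))
        (simpleMax cs j (s j * (t * u))) :=
      ReflTransGen.lift' (simpleMax cs j) (fun _ _ (hstep : UnitStep cs k _ _) =>
        hstep.reflTransGen_simpleMax j) _ _ h
    rwa [simpleMax_simple_mul, simpleMax_simple_mul, simpleMax_of_isLeftDescent huj,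
      simpleMax_of_isLeftDescent (isLeftDescent_mul_of_isLeftDescent ht hj hu huj)] at hmax
  · have hmin : ReflTransGen (UnitStep cs (k + 1)) (simpleMin cs j (s j * u))
        (simpleMin cs j (s j * (t * u))) :=
      ReflTransGen.lift' (simpleMin cs j) (fun _ _ (hstep : UnitStep cs k _ _) =>
        hstep.reflTransGen_simpleMin j) _ _ h
    rw [simpleMin_simple_mul, simpleMin_simple_mul, simpleMin_of_not_isLeftDescent huj] at hmin
    exact hmin.trans (reflTransGen_unitStep_simpleMin_self (k + 1) j (t * u))

theorem reflTransGen_unitStep_mul (ht : t ∈ TkSet cs k) (hu : ℓ u < ℓ(t * u)) :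
    ReflTransGen (UnitStep cs k) u (t * u) := by
  induction k generalizing t u with
  | zero =>
    obtain ⟨j, rfl⟩ := cs.length_eq_one_iff.mp (le_antisymm ht.2 ht.1.odd_length.pos)
    exact .single (unitStep_simple_mul 0 hu.not_gt)
  | succ k ih =>
    have ht1 : t ≠ 1 := cs.length_eq_zero_iff.not.mp ht.1.odd_length.pos.ne'
    obtain ⟨j, hj⟩ := cs.exists_leftDescent_of_ne_one ht1
    rcases eq_or_ne t (s j) with rfl | htj
    · exact .single (unitStep_simple_mul (k + 1) hu.not_gt)
    refine reflTransGen_unitStep_mul_of_simple_mul ht.1 hj hu ?_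
    have hconj : s j * t * s j ∈ TkSet cs k := by
      refine ⟨by simpa using ht.1.conj (s j), ?_⟩
      have hlen := length_simple_mul_mul_simple_add_two ht.1 htj hj
      have htk := ht.2
      lia
    have hup := length_simple_mul_lt_of_length_lt ht.1 htj hu
    rw [← simple_conj_mul_simple_mul] at hup ⊢
    exact ih hconj hup

theorem leLk_iff_reflTransGen_unitStep : leLk cs k x y ↔ ReflTransGen (UnitStep cs k) x y := by
  constructor
  · refine reflTransGen_closed ?_ x y
    rintro x _ ⟨t, ht, rfl, hlen⟩
    exact reflTransGen_unitStep_mul ht hlen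
  · refine ReflTransGen.mono ?_ x y
    rintro x y ⟨t, ht, hy, hlen⟩
    exact ⟨t, ht, hy, by lia⟩

theorem CovL.length_eq (h : CovL cs.length (TkSet cs k) x y) : ℓ y = ℓ x + 1 := by
  obtain ⟨⟨hle, hne⟩, hcov⟩ := h
  obtain rfl | ⟨w, hxw, hwy⟩ := (leLk_iff_reflTransGen_unitStep.mp hle).cases_head
  · exact absurd rfl hne
  · obtain rfl : w = y := by
      by_contra hwy_ne
      exact hcov ⟨w, hxw.ltL, leLk_iff_reflTransGen_unitStep.mpr hwy, hwy_ne⟩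
    exact hxw.length_eq

end SaturatedChains

end KBruhatPaper

/-- the poset `(W, ≤_{L^k})` is graded with rank function `ℓ`: every
maximal chain (chain of covering relations) from `u` to `v` has length
`ℓ(v) - ℓ(u)`; in particular if `u <_{L^k} v` there is a chain from `u` to `v` of
steps in `T_k` each raising the length by exactly `1`. -/
theorem stmt_4 {B W : Type*} [Group W] {M : CoxeterMatrix B} (cs : CoxeterSystem M W)
    (k : ℕ) :
    (∀ (u v : W) (n : ℕ) (x : ℕ → W), x 0 = u → x n = v →
      (∀ i < n, CovL cs.length (TkSet cs k) (x i) (x (i + 1))) →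
      leLk cs k u v →
      cs.length v = cs.length u + n) ∧
    (∀ u v : W, ltLk cs k u v →
      ∃ (n : ℕ) (x : ℕ → W), x 0 = u ∧ x n = v ∧ cs.length v = cs.length u + n ∧
        ∀ i < n, x (i + 1) * (x i)⁻¹ ∈ TkSet cs k ∧
          cs.length (x (i + 1)) = cs.length (x i) + 1) := by
  constructor
  · rintro u v n x rfl rfl hcov -
    exact eq_add_of_forall_succ_eq_add_one (f := cs.length ∘ x) fun i hi => (hcov i hi).length_eq
  · rintro u v ⟨hle, -⟩
    obtain ⟨n, x, rfl, rfl, hx⟩ :=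
      exists_seq_of_reflTransGen (leLk_iff_reflTransGen_unitStep.mp hle)
    refine ⟨n, x, rfl, rfl, ?_, fun i hi => ⟨?_, (hx i hi).length_eq⟩⟩
    · exact eq_add_of_forall_succ_eq_add_one (f := cs.length ∘ x) fun i hi => (hx i hi).length_eq
    · obtain ⟨t, ht, hxt, -⟩ := hx i hi
      rwa [hxt, mul_inv_cancel_right]
end

section
/- Let (W,S) be a Coxeter system, J ⊆ S and k ∈ ℕ. Then the parabolic projection P^J is order preserving on (W, ≤_{L^k}): for all u, v ∈ W, u ≤_{L^k} v implies P^J(u) ≤_{L^k} P^J(v). -/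
open KBruhatPaper

/-!
Positivity of roots in the geometric representation (`w α_i ≥ 0` unless `s_i` is a right descent
of `w`) turns the left inversions of `w` into sign conditions. This shows how they change when `w`
is multiplied by a simple reflection, and that `t a` inherits a common left descent of `t` and `a`
when the reflection `t` lengthens `a`.

The core is the case of one step: if `ℓ(a) < ℓ(t a)`, `a s > a` and `t a s < t a`, then
`a ≤_{L^k} t a s`. A left descent `p ≠ t` of `t` conjugates the step by `p` to a step along the
reflection `p t p`, which is shorter by exactly 2, so induction on `k` gives
`p a ≤_{L^{k-1}} p t a s`; multiplying back by `p` costs at most 1 in `k`. Repeating the descent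
`v ↦ v s` inside `v W_J` shows that a minimal coset representative `a ≤_{L^k} v` stays below
`P^J(v)`. For a step `y → t y`, the left inversions of `P^J(y)` are left inversions of `y`, so
`P^J(y) → t P^J(y)` is again a step, ending in the coset `t y W_J`.
-/

namespace CoxeterGeometry

open Polynomial.Chebyshev Real

section Dihedral

lemma sin_mul_pi_div_pos {a m : ℝ} (ha : 0 < a) (ham : a < m) : 0 < sin (a * (π / m)) := by
  have hm : 0 < m := ha.trans ham
  refine sin_pos_of_pos_of_lt_pi (by positivity) ?_
  rw [← mul_div_assoc, div_lt_iff₀ hm, mul_comm π]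
  gcongr

lemma eval_S_two_mul_cos_two_pi_div_eq_zero {n : ℕ} (hn : 2 ≤ n) :
    (S ℝ (n - 1)).eval (2 * cos (2 * (π / (2 * n : ℕ)))) = 0 := by
  have hsin : 0 < sin (2 * (π / (2 * n : ℕ))) :=
    sin_mul_pi_div_pos two_pos (by norm_cast; omega)
  refine (mul_eq_zero.1 ?_).resolve_right hsin.ne'
  have hn' : (n : ℝ) ≠ 0 := by positivity
  rw [S_two_mul_real_cos, ← sin_pi]
  congr 1
  push_cast
  field_simp
  ring

lemma eval_S_add_eval_S_two_mul_cos_two_pi_div_eq_zero {n : ℕ} (hn : 1 ≤ n) :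
    (S ℝ n).eval (2 * cos (2 * (π / (2 * n + 1 : ℕ)))) +
      (S ℝ (n - 1)).eval (2 * cos (2 * (π / (2 * n + 1 : ℕ)))) = 0 := by
  have hsin : 0 < sin (2 * (π / (2 * n + 1 : ℕ))) :=
    sin_mul_pi_div_pos two_pos (by norm_cast; omega)
  refine (mul_eq_zero.1 ?_).resolve_right hsin.ne'
  have hangle : (((n : ℤ) : ℝ) + 1) * (2 * (π / (2 * n + 1 : ℕ))) =
      2 * π - (((n - 1 : ℤ) : ℝ) + 1) * (2 * (π / (2 * n + 1 : ℕ))) := by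
    push_cast
    field_simp
    ring
  rw [add_mul, S_two_mul_real_cos, S_two_mul_real_cos, hangle, sin_two_pi_sub, neg_add_cancel]

lemma eval_S_two_mul_cos_pi_div_nonneg {m n : ℕ} (hm : m ≠ 1) (hmn : m = 0 ∨ n ≤ m) :
    0 ≤ (S ℝ (n - 1)).eval (2 * cos (π / m)) := by
  obtain rfl | hm0 := eq_or_ne m 0
  · simp [S_eval_two]
  have hsin : 0 < sin (π / m) := by
    simpa using sin_mul_pi_div_pos one_pos (by norm_cast; omega : (1 : ℝ) < m)
  refine nonneg_of_mul_nonneg_left ?_ hsin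
  rw [S_two_mul_real_cos]
  push_cast
  have hm0' : (0 : ℝ) < m := by positivity
  have hnm : (n : ℝ) ≤ m := by exact_mod_cast hmn.resolve_left hm0
  refine sin_nonneg_of_nonneg_of_le_pi (by ring_nf; positivity) ?_
  calc ((n : ℝ) - 1 + 1) * (π / m) = n / m * π := by ring
    _ ≤ π := mul_le_of_le_one_left pi_pos.le (div_le_one_of_le₀ hnm hm0'.le)

variable {V : Type*} [AddCommGroup V] [Module ℝ V] {x y : V} {f g : Module.Dual ℝ V}

lemma reflection_mul_reflection_pow_eq_one {m : ℕ} (hm : 3 ≤ m) (hf : f x = 2) (hg : g y = 2)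
    (hfg : f y * g x = (2 * cos (π / m)) ^ 2) :
    (Module.reflection hf * Module.reflection hg) ^ m = 1 := by
  have ht : 2 * cos (2 * (π / m)) = f y * g x - 2 := by rw [hfg, cos_two_mul]; ring
  refine LinearEquiv.ext fun z => ?_
  rw [Module.reflection_mul_reflection_pow_apply hf hg m z _ ht]
  obtain ⟨n, rfl | rfl⟩ := m.even_or_odd'
  · rw [show (((2 * n : ℕ) : ℤ) - 2) / 2 = n - 1 by omega,
      show (((2 * n : ℕ) : ℤ) - 1) / 2 = n - 1 by omega,
      eval_S_two_mul_cos_two_pi_div_eq_zero (by omega)]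
    simp
  · rw [show (((2 * n + 1 : ℕ) : ℤ) - 2) / 2 = n - 1 by omega,
      show (((2 * n + 1 : ℕ) : ℤ) - 1) / 2 = n by omega,
      show (((2 * n + 1 : ℕ) : ℤ) - 3) / 2 = n - 1 by omega,
      show ((2 * n + 1 : ℕ) : ℤ) / 2 = n by omega,
      eval_S_add_eval_S_two_mul_cos_two_pi_div_eq_zero (by omega)]
    simp

lemma reflection_mul_reflection_sq_eq_one (hf : f x = 2) (hg : g y = 2) (hfy : f y = 0)
    (hgx : g x = 0) : (Module.reflection hf * Module.reflection hg) ^ 2 = 1 := by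
  refine LinearEquiv.ext fun z => ?_
  rw [Module.reflection_mul_reflection_pow_apply hf hg]
  simp [hfy, hgx]
  norm_num
  module

end Dihedral

section GeometricRepresentation

variable {B : Type*} {W : Type*} [Group W] (M : CoxeterMatrix B)

/-- The simple root `α_i`, a basis vector of the real vector space of the geometric
representation; `0 ≤ v` in `B →₀ ℝ` says that all simple root coordinates of `v` are
nonnegative. -/
noncomputable def simpleRoot (i : B) : B →₀ ℝ :=
  Finsupp.single i 1

/-- The simple coroot `v ↦ 2 B(α_i, v)`, where `B(α_i, α_j) = -cos (π / m_{ij})`. The value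
`m_{ij} = 0` encodes `m_{ij} = ∞`; there `π / 0 = 0` gives the usual convention
`B(α_i, α_j) = -1`. -/
noncomputable def simpleCoroot (i : B) : Module.Dual ℝ (B →₀ ℝ) :=
  Finsupp.linearCombination ℝ fun j => -2 * cos (π / M i j)

lemma simpleRoot_nonneg (i : B) : 0 ≤ simpleRoot i := by
  simp [simpleRoot]

lemma simpleRoot_ne_zero (i : B) : simpleRoot i ≠ 0 := by
  simp [simpleRoot]

variable {M} in
lemma simpleCoroot_simpleRoot (i j : B) :
    simpleCoroot M i (simpleRoot j) = -2 * cos (π / M i j) := by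
  simp [simpleCoroot, simpleRoot]

lemma simpleCoroot_simpleRoot_self (i : B) : simpleCoroot M i (simpleRoot i) = 2 := by
  simp [simpleCoroot_simpleRoot]

/-- The reflection `v ↦ v - 2 B(α_i, v) α_i` by which `s_i` acts in the geometric
representation. -/
noncomputable def simpleReflection (i : B) : (B →₀ ℝ) ≃ₗ[ℝ] (B →₀ ℝ) :=
  Module.reflection (simpleCoroot_simpleRoot_self M i)

lemma isLiftable_simpleReflection : M.IsLiftable (simpleReflection M) := by
  intro i j
  obtain rfl | hij := eq_or_ne i j
  · rw [M.diagonal, pow_one]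
    exact mul_eq_one_iff_eq_inv.2 (Module.reflection_inv _).symm
  have hm := M.off_diagonal i j hij
  have hpair (i' j' : B) := simpleCoroot_simpleRoot (M := M) i' j'
  obtain h0 | h2 | h3 : M i j = 0 ∨ M i j = 2 ∨ 3 ≤ M i j := by omega
  · rw [h0, pow_zero]
  · rw [h2]
    refine reflection_mul_reflection_sq_eq_one _ _ ?_ ?_
    · simp [hpair, h2]
    · simp [hpair, M.symmetric j i, h2]
  · refine reflection_mul_reflection_pow_eq_one h3 _ _ ?_
    rw [hpair, hpair, M.symmetric j i]
    ring

variable {M} (cs : CoxeterSystem M W)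

/-- The geometric representation of the Coxeter system. -/
noncomputable def geomRep : Representation ℝ W (B →₀ ℝ) :=
  LinearEquiv.automorphismGroup.toLinearMapMonoidHom.comp
    (cs.lift ⟨simpleReflection M, isLiftable_simpleReflection M⟩)

lemma geomRep_simple_apply (i : B) (v : B →₀ ℝ) :
    geomRep cs (cs.simple i) v = v - simpleCoroot M i v • simpleRoot i := by
  simp [geomRep, simpleReflection, Module.reflection_apply]

lemma geomRep_simple_simpleRoot_self (i : B) :
    geomRep cs (cs.simple i) (simpleRoot i) = -simpleRoot i := by
  rw [geomRep_simple_apply, simpleCoroot_simpleRoot_self]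
  module

lemma geomRep_simple_simpleRoot (i j : B) :
    geomRep cs (cs.simple i) (simpleRoot j) =
      simpleRoot j + (2 * cos (π / M i j)) • simpleRoot i := by
  rw [geomRep_simple_apply, simpleCoroot_simpleRoot]
  module

lemma geomRep_mul_apply (w w' : W) (v : B →₀ ℝ) :
    geomRep cs (w * w') v = geomRep cs w (geomRep cs w' v) := by
  simp

lemma geomRep_mul_simple_simpleRoot (w : W) (i : B) :
    geomRep cs (w * cs.simple i) (simpleRoot i) = -geomRep cs w (simpleRoot i) := by
  rw [geomRep_mul_apply, geomRep_simple_simpleRoot_self, map_neg]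

lemma geomRep_simple_apply_of_ne {p i : B} (h : i ≠ p) (v : B →₀ ℝ) :
    geomRep cs (cs.simple p) v i = v i := by
  simp [geomRep_simple_apply, simpleRoot, h]

lemma geomRep_alternatingWord_simpleRoot (i j : B) (n : ℕ) :
    geomRep cs (cs.wordProd (CoxeterSystem.alternatingWord i j n)) (simpleRoot i) =
      if Even n then
        (S ℝ n).eval (2 * cos (π / M i j)) • simpleRoot i +
          (S ℝ (n - 1)).eval (2 * cos (π / M i j)) • simpleRoot j
      else
        (S ℝ (n - 1)).eval (2 * cos (π / M i j)) • simpleRoot i +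
          (S ℝ n).eval (2 * cos (π / M i j)) • simpleRoot j := by
  induction n with
  | zero => simp [CoxeterSystem.alternatingWord]
  | succ n ih =>
    have hS : (S ℝ (n + 1)).eval (2 * cos (π / M i j)) =
        2 * cos (π / M i j) * (S ℝ n).eval (2 * cos (π / M i j)) -
          (S ℝ (n - 1)).eval (2 * cos (π / M i j)) := by
      simp [S_add_one]
    rw [CoxeterSystem.alternatingWord_succ', cs.wordProd_cons, geomRep_mul_apply, ih]
    push_cast
    rw [add_sub_cancel_right, hS]
    by_cases hn : Even n
    · simp only [hn, Nat.even_add_one, not_true, if_true, if_false, map_add, map_smul,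
        geomRep_simple_simpleRoot cs j i, M.symmetric j i, geomRep_simple_simpleRoot_self]
      module
    · simp only [hn, Nat.even_add_one, not_false_iff, if_true, if_false, map_add, map_smul,
        geomRep_simple_simpleRoot cs i j, geomRep_simple_simpleRoot_self]
      module

lemma exists_eq_mul_alternatingWord {w : W} {i : B} (j : B) (hi : ¬cs.IsRightDescent w i) :
    ∃ (v : W) (n : ℕ), w = v * cs.wordProd (CoxeterSystem.alternatingWord i j n) ∧
      cs.length w = cs.length v + n ∧ ¬cs.IsRightDescent v i ∧ ¬cs.IsRightDescent v j := by
  induction hw : cs.length w generalizing w i j with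
  | zero =>
    obtain rfl := cs.length_eq_zero_iff.1 hw
    exact ⟨1, 0, by simp [CoxeterSystem.alternatingWord], by simp, hi, by
      simp [CoxeterSystem.IsRightDescent]⟩
  | succ n ih =>
    by_cases hj : cs.IsRightDescent w j
    · have hlen := cs.isRightDescent_iff.1 hj
      obtain ⟨v, k, hwv, hvk, hvj, hvi⟩ :=
        ih i (cs.isRightDescent_iff_not_isRightDescent_mul.1 hj) (by omega)
      refine ⟨v, k + 1, ?_, by omega, hvi, hvj⟩
      rw [CoxeterSystem.alternatingWord_succ, cs.wordProd_concat, ← mul_assoc, ← hwv,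
        cs.simple_mul_simple_cancel_right]
    · exact ⟨w, 0, by simp [CoxeterSystem.alternatingWord], by simp [hw], hi, hj⟩

lemma lt_of_length_mul_alternatingWord {v : W} {i j : B} {n : ℕ} (h0 : M i j ≠ 0)
    (hlen : cs.length (v * cs.wordProd (CoxeterSystem.alternatingWord i j n)) =
      cs.length v + n)
    (hi : ¬cs.IsRightDescent (v * cs.wordProd (CoxeterSystem.alternatingWord i j n)) i) :
    n < M i j := by
  by_contra! hn
  have hnot := cs.not_isReduced_alternatingWord j i (m := n + 1) (by rwa [M.symmetric])
    (by rw [M.symmetric]; omega)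
  have hlt : cs.length (cs.wordProd (CoxeterSystem.alternatingWord j i (n + 1))) < n + 1 := by
    refine lt_of_le_of_ne ?_ fun h => hnot ?_
    · simpa using cs.length_wordProd_le (CoxeterSystem.alternatingWord j i (n + 1))
    · rw [CoxeterSystem.IsReduced, h, CoxeterSystem.length_alternatingWord]
  have hle := cs.length_mul_le v (cs.wordProd (CoxeterSystem.alternatingWord j i (n + 1)))
  have hsucc := cs.not_isRightDescent_iff.1 hi
  rw [mul_assoc, ← cs.wordProd_concat, ← CoxeterSystem.alternatingWord_succ] at hsucc
  omega

theorem geomRep_simpleRoot_nonneg {w : W} {i : B} (hi : ¬cs.IsRightDescent w i) :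
    0 ≤ geomRep cs w (simpleRoot i) := by
  induction hw : cs.length w using Nat.strong_induction_on generalizing w i with
  | _ l ih =>
    obtain rfl | hne := eq_or_ne w 1
    · simpa using simpleRoot_nonneg i
    obtain ⟨j, hj⟩ := cs.exists_rightDescent_of_ne_one hne
    have hij : i ≠ j := by rintro rfl; exact hi hj
    obtain ⟨v, n, rfl, hlen, hvi, hvj⟩ := exists_eq_mul_alternatingWord cs j hi
    have hn : n ≠ 0 := by
      rintro rfl
      exact hvj (by simpa [CoxeterSystem.alternatingWord] using hj)
    have hroot_i : 0 ≤ geomRep cs v (simpleRoot i) := ih _ (by omega) hvi rfl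
    have hroot_j : 0 ≤ geomRep cs v (simpleRoot j) := ih _ (by omega) hvj rfl
    have hbound : M i j = 0 ∨ n + 1 ≤ M i j :=
      or_iff_not_imp_left.2 fun h0 => lt_of_length_mul_alternatingWord cs h0 hlen hi
    have hS_pred : 0 ≤ (S ℝ (n - 1)).eval (2 * cos (π / M i j)) :=
      eval_S_two_mul_cos_pi_div_nonneg (M.off_diagonal i j hij) (by omega)
    have hS : 0 ≤ (S ℝ n).eval (2 * cos (π / M i j)) := by
      simpa using eval_S_two_mul_cos_pi_div_nonneg (M.off_diagonal i j hij) hbound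
    rw [geomRep_mul_apply, geomRep_alternatingWord_simpleRoot]
    split_ifs <;> rw [map_add, map_smul, map_smul] <;> positivity

theorem geomRep_simpleRoot_nonpos {w : W} {i : B} (hi : cs.IsRightDescent w i) :
    geomRep cs w (simpleRoot i) ≤ 0 := by
  have h := geomRep_simpleRoot_nonneg cs (cs.isRightDescent_iff_not_isRightDescent_mul.1 hi)
  rwa [geomRep_mul_simple_simpleRoot, neg_nonneg] at h

lemma geomRep_simpleRoot_nonneg_or_nonpos (w : W) (i : B) :
    0 ≤ geomRep cs w (simpleRoot i) ∨ geomRep cs w (simpleRoot i) ≤ 0 :=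
  (em (cs.IsRightDescent w i)).symm.imp (geomRep_simpleRoot_nonneg cs)
    (geomRep_simpleRoot_nonpos cs)

end GeometricRepresentation

section Roots

variable {B : Type*} {W : Type*} [Group W] {M : CoxeterMatrix B} {cs : CoxeterSystem M W}
variable {t w a : W} {β : B →₀ ℝ} {i p : B}

/-- `β` is a root of the reflection `t`, that is, `β = w α_i` and `t = w s_i w⁻¹` for some `w`
and `i`; every reflection has two opposite roots. -/
def IsRootOf (cs : CoxeterSystem M W) (t : W) (β : B →₀ ℝ) : Prop :=
  ∃ w i, t = w * cs.simple i * w⁻¹ ∧ β = geomRep cs w (simpleRoot i)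

lemma isRootOf_simpleRoot (i : B) : IsRootOf cs (cs.simple i) (simpleRoot i) :=
  ⟨1, i, by simp, by simp⟩

namespace IsRootOf

lemma isReflection (h : IsRootOf cs t β) : cs.IsReflection t := by
  obtain ⟨w, i, rfl, rfl⟩ := h
  exact ⟨w, i, rfl⟩

lemma conj (h : IsRootOf cs t β) (w : W) : IsRootOf cs (w * t * w⁻¹) (geomRep cs w β) := by
  obtain ⟨g, i, rfl, rfl⟩ := h
  exact ⟨w * g, i, by group, (geomRep_mul_apply cs w g _).symm⟩

lemma neg (h : IsRootOf cs t β) : IsRootOf cs t (-β) := by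
  obtain ⟨w, i, rfl, rfl⟩ := h
  exact ⟨w * cs.simple i, i, by simp [mul_assoc], (geomRep_mul_simple_simpleRoot cs w i).symm⟩

lemma ne_zero (h : IsRootOf cs t β) : β ≠ 0 := by
  obtain ⟨w, i, rfl, rfl⟩ := h
  intro h0
  refine simpleRoot_ne_zero i ?_
  rw [← (geomRep cs).inv_self_apply w (simpleRoot i), h0, map_zero]

lemma nonneg_or_nonpos (h : IsRootOf cs t β) : 0 ≤ β ∨ β ≤ 0 := by
  obtain ⟨w, i, rfl, rfl⟩ := h
  exact geomRep_simpleRoot_nonneg_or_nonpos cs w i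

lemma geomRep_apply_self (h : IsRootOf cs t β) : geomRep cs t β = -β := by
  obtain ⟨w, i, rfl, rfl⟩ := h
  rw [geomRep_mul_apply, (geomRep cs).inv_self_apply, geomRep_mul_simple_simpleRoot]

lemma exists_geomRep_apply_eq_sub_smul (h : IsRootOf cs t β) (v : B →₀ ℝ) :
    ∃ c : ℝ, geomRep cs t v = v - c • β := by
  obtain ⟨w, i, rfl, rfl⟩ := h
  refine ⟨simpleCoroot M i (geomRep cs w⁻¹ v), ?_⟩
  rw [geomRep_mul_apply, geomRep_mul_apply, geomRep_simple_apply, map_sub, map_smul,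
    (geomRep cs).self_inv_apply]

lemma eq_simple_of_smul_simpleRoot {c : ℝ} (h : IsRootOf cs t (c • simpleRoot p)) :
    t = cs.simple p := by
  have hc : c ≠ 0 := by
    rintro rfl
    exact h.ne_zero (zero_smul ℝ _)
  have htp : geomRep cs t (simpleRoot p) = -simpleRoot p := by
    have hself := h.geomRep_apply_self
    rw [map_smul, ← smul_neg] at hself
    exact smul_right_injective _ hc hself
  suffices htp_one : t * cs.simple p = 1 by
    rw [mul_eq_one_iff_eq_inv.1 htp_one, cs.inv_simple]
  by_contra hne
  obtain ⟨s, hs⟩ := cs.exists_rightDescent_of_ne_one hne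
  have hneg : geomRep cs (t * cs.simple p) (simpleRoot s) ≤ 0 := geomRep_simpleRoot_nonpos cs hs
  obtain rfl | hsp := eq_or_ne s p
  · rw [geomRep_mul_simple_simpleRoot, htp, neg_neg] at hneg
    exact simpleRoot_ne_zero s (hneg.antisymm (simpleRoot_nonneg s))
  · obtain ⟨d, hd⟩ := h.exists_geomRep_apply_eq_sub_smul (geomRep cs (cs.simple p) (simpleRoot s))
    rw [geomRep_mul_apply, hd] at hneg
    have hcoord := hneg s
    rw [Finsupp.sub_apply, geomRep_simple_apply_of_ne cs hsp] at hcoord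
    norm_num [simpleRoot, hsp.symm] at hcoord

lemma eq_simple (h : IsRootOf cs t β) (hβ : 0 ≤ β) (hp : geomRep cs (cs.simple p) β ≤ 0) :
    t = cs.simple p := by
  have hβp : β = β p • simpleRoot p := by
    ext j
    obtain rfl | hj := eq_or_ne j p
    · simp [simpleRoot]
    · have hj_nonpos := hp j
      rw [geomRep_simple_apply_of_ne cs hj] at hj_nonpos
      simpa [simpleRoot, hj.symm] using hj_nonpos.antisymm (hβ j)
  rw [hβp] at h
  exact h.eq_simple_of_smul_simpleRoot

lemma geomRep_simple_nonpos_iff (h : IsRootOf cs t β) (hp : t ≠ cs.simple p) :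
    geomRep cs (cs.simple p) β ≤ 0 ↔ β ≤ 0 := by
  refine ⟨fun hneg => ?_, fun hneg => ?_⟩
  · exact h.nonneg_or_nonpos.resolve_left fun hβ => hp (h.eq_simple hβ hneg)
  · refine (h.conj (cs.simple p)).nonneg_or_nonpos.resolve_left fun hpos => hp ?_
    exact h.neg.eq_simple (neg_nonneg.2 hneg) (by rwa [map_neg, neg_nonpos])

lemma isLeftInversion_of_geomRep_inv_nonpos (h : IsRootOf cs t β) (hβ : 0 ≤ β)
    (hw : geomRep cs w⁻¹ β ≤ 0) : cs.IsLeftInversion w t := by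
  induction hlen : cs.length w generalizing w t β with
  | zero =>
    obtain rfl := cs.length_eq_zero_iff.1 hlen
    exact absurd (le_antisymm (by simpa using hw) hβ) h.ne_zero
  | succ n ih =>
    obtain ⟨p, hp⟩ := cs.exists_leftDescent_of_ne_one (w := w) (by rintro rfl; simp at hlen)
    obtain rfl | htp := eq_or_ne t (cs.simple p)
    · exact (cs.isLeftInversion_simple_iff_isLeftDescent w p).2 hp
    have hpw := cs.isLeftDescent_iff.1 hp
    have hpos : 0 ≤ geomRep cs (cs.simple p) β :=
      (h.conj _).nonneg_or_nonpos.resolve_right fun hneg => htp (h.eq_simple hβ hneg)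
    have hinv := ih (w := cs.simple p * w) (h.conj (cs.simple p)) hpos
      (by rwa [← geomRep_mul_apply, mul_inv_rev, cs.inv_simple, cs.simple_mul_simple_cancel_right])
      (by omega)
    have hlt : cs.length (cs.simple p * (t * w)) < cs.length (cs.simple p * w) := by
      simpa [mul_assoc] using hinv.2
    have hdiff := cs.length_simple_mul (t * w) p
    exact ⟨h.isReflection, by omega⟩

theorem isLeftInversion_iff (h : IsRootOf cs t β) (hβ : 0 ≤ β) :
    cs.IsLeftInversion w t ↔ geomRep cs w⁻¹ β ≤ 0 := by
  refine ⟨fun hinv => ?_, h.isLeftInversion_of_geomRep_inv_nonpos hβ⟩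
  refine (h.conj w⁻¹).nonneg_or_nonpos.resolve_left fun hpos => ?_
  have hinv' : cs.IsLeftInversion (t * w) t := by
    refine h.isLeftInversion_of_geomRep_inv_nonpos hβ ?_
    rwa [mul_inv_rev, geomRep_mul_apply, h.isReflection.inv, h.geomRep_apply_self, map_neg,
      neg_nonpos]
  have hlt := hinv'.2
  rw [← mul_assoc, h.isReflection.mul_self, one_mul] at hlt
  exact hlt.not_gt hinv.2

lemma geomRep_inv_nonneg (h : IsRootOf cs t β) (hβ : 0 ≤ β) (hw : ¬cs.IsLeftInversion w t) :
    0 ≤ geomRep cs w⁻¹ β := by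
  rw [h.isLeftInversion_iff hβ] at hw
  exact (h.conj w⁻¹).nonneg_or_nonpos.resolve_right hw

end IsRootOf

lemma exists_nonneg_isRootOf (ht : cs.IsReflection t) : ∃ β, IsRootOf cs t β ∧ 0 ≤ β := by
  obtain ⟨w, i, rfl⟩ := ht
  have hroot : IsRootOf cs (w * cs.simple i * w⁻¹) (geomRep cs w (simpleRoot i)) := ⟨w, i, rfl, rfl⟩
  obtain hpos | hneg := hroot.nonneg_or_nonpos
  · exact ⟨_, hroot, hpos⟩
  · exact ⟨_, hroot.neg, neg_nonneg.2 hneg⟩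

lemma isLeftDescent_iff_geomRep_inv_nonpos :
    cs.IsLeftDescent w p ↔ geomRep cs w⁻¹ (simpleRoot p) ≤ 0 := by
  rw [← cs.isLeftInversion_simple_iff_isLeftDescent,
    (isRootOf_simpleRoot p).isLeftInversion_iff (simpleRoot_nonneg p)]

theorem isLeftInversion_simple_mul_iff (ht : cs.IsReflection t) (hp : t ≠ cs.simple p) :
    cs.IsLeftInversion (cs.simple p * w) (cs.simple p * t * (cs.simple p)⁻¹) ↔
      cs.IsLeftInversion w t := by
  obtain ⟨β, hroot, hβ⟩ := exists_nonneg_isRootOf ht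
  have hpos : 0 ≤ geomRep cs (cs.simple p) β :=
    (hroot.conj _).nonneg_or_nonpos.resolve_right fun hneg => hp (hroot.eq_simple hβ hneg)
  rw [hroot.isLeftInversion_iff hβ, (hroot.conj _).isLeftInversion_iff hpos, mul_inv_rev,
    geomRep_mul_apply, (geomRep cs).inv_self_apply]

theorem isLeftInversion_mul_simple_iff (hti : t * a ≠ a * cs.simple i) :
    cs.IsLeftInversion (a * cs.simple i) t ↔ cs.IsLeftInversion a t := by
  by_cases ht : cs.IsReflection t
  · obtain ⟨β, hroot, hβ⟩ := exists_nonneg_isRootOf ht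
    have hconj : a⁻¹ * t * a⁻¹⁻¹ ≠ cs.simple i := by
      rwa [inv_inv, mul_assoc, ne_eq, inv_mul_eq_iff_eq_mul]
    rw [hroot.isLeftInversion_iff hβ, hroot.isLeftInversion_iff hβ, mul_inv_rev, cs.inv_simple,
      geomRep_mul_apply, (hroot.conj a⁻¹).geomRep_simple_nonpos_iff hconj]
  · simp [CoxeterSystem.IsLeftInversion, ht]

lemma isLeftInversion_mul_simple (ha : ¬cs.IsRightDescent a i) (ht : cs.IsLeftInversion a t) :
    cs.IsLeftInversion (a * cs.simple i) t := by
  refine (isLeftInversion_mul_simple_iff fun hti => ha ?_).2 ht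
  rw [CoxeterSystem.IsRightDescent, ← hti]
  exact ht.2

lemma isLeftDescent_mul_simple (ha : ¬cs.IsRightDescent a i) (hp : cs.IsLeftDescent a p) :
    cs.IsLeftDescent (a * cs.simple i) p := by
  rw [← cs.isLeftInversion_simple_iff_isLeftDescent] at hp ⊢
  exact isLeftInversion_mul_simple ha hp

lemma isRightDescent_simple_mul_iff (hne : cs.simple p * a ≠ a * cs.simple i) :
    cs.IsRightDescent (cs.simple p * a) i ↔ cs.IsRightDescent a i := by
  have hne' : cs.simple i * a⁻¹ ≠ a⁻¹ * cs.simple p := by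
    rwa [ne_eq, ← inv_inj, mul_inv_rev, mul_inv_rev, inv_inv, cs.inv_simple, cs.inv_simple,
      eq_comm]
  rw [← cs.isLeftDescent_inv_iff, ← cs.isLeftDescent_inv_iff, mul_inv_rev, cs.inv_simple,
    ← cs.isLeftInversion_simple_iff_isLeftDescent, isLeftInversion_mul_simple_iff hne',
    cs.isLeftInversion_simple_iff_isLeftDescent]

theorem isLeftDescent_mul (ht : cs.IsReflection t) (htp : cs.IsLeftDescent t p)
    (hap : cs.IsLeftDescent a p) (hta : ¬cs.IsLeftInversion a t) :
    cs.IsLeftDescent (t * a) p := by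
  obtain ⟨β, hroot, hβ⟩ := exists_nonneg_isRootOf ht
  have hβa : 0 ≤ geomRep cs a⁻¹ β := hroot.geomRep_inv_nonneg hβ hta
  rw [isLeftDescent_iff_geomRep_inv_nonpos] at htp hap ⊢
  rw [ht.inv] at htp
  rw [mul_inv_rev, geomRep_mul_apply, ht.inv]
  obtain ⟨c, hc⟩ := hroot.exists_geomRep_apply_eq_sub_smul (simpleRoot p)
  rw [hc] at htp ⊢
  have hc_nonneg : 0 ≤ c := by
    by_contra! hneg
    have hcβ : c • β ≤ 0 := smul_nonpos_of_nonpos_of_nonneg hneg.le hβ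
    exact simpleRoot_ne_zero p
      (((sub_nonpos.1 htp).trans hcβ).antisymm (simpleRoot_nonneg p))
  rw [map_sub, map_smul, sub_nonpos]
  exact hap.trans (smul_nonneg hc_nonneg hβa)

theorem length_simple_conj_add_two (ht : cs.IsReflection t)
    (htp : cs.IsLeftDescent t p) (hne : t ≠ cs.simple p) :
    cs.length (cs.simple p * t * (cs.simple p)⁻¹) + 2 = cs.length t := by
  have hlt : cs.length (cs.simple p * t) + 1 = cs.length t := cs.isLeftDescent_iff.1 htp
  have hright : cs.length (t * cs.simple p) = cs.length (cs.simple p * t) := by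
    rw [← cs.length_inv, mul_inv_rev, ht.inv, cs.inv_simple]
  have hpos : cs.length (cs.simple p * t) ≠ 0 := by
    rw [ne_eq, cs.length_eq_zero_iff, mul_eq_one_iff_inv_eq, cs.inv_simple]
    exact hne.symm
  have hnot : ¬cs.IsLeftInversion (cs.simple p) t := fun h => by
    have := h.2
    rw [cs.length_simple] at this
    omega
  have hdesc : cs.IsLeftDescent (t * cs.simple p) p :=
    isLeftDescent_mul ht htp (by simp [CoxeterSystem.IsLeftDescent]) hnot
  rw [cs.isLeftDescent_iff, ← mul_assoc] at hdesc
  rw [cs.inv_simple]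
  omega

end Roots

end CoxeterGeometry

namespace KBruhatPaper

open CoxeterGeometry

section IntermediateOrder

variable {B : Type*} {W : Type*} [Group W] {M : CoxeterMatrix B} {cs : CoxeterSystem M W}
variable {k l : ℕ} {t a v x y z : W} {p i : B}

lemma step_TkSet_iff : Step cs.length (TkSet cs k) x y ↔
    ∃ t, cs.IsReflection t ∧ cs.length t ≤ 2 * k + 1 ∧ ¬cs.IsLeftInversion x t ∧ y = t * x := by
  constructor
  · rintro ⟨t, ⟨ht, htk⟩, rfl, hlt⟩
    exact ⟨t, ht, htk, fun hinv => hinv.2.not_gt hlt, rfl⟩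
  · rintro ⟨t, ht, htk, hinv, rfl⟩
    exact ⟨t, ⟨ht, htk⟩, rfl, lt_of_le_of_ne (not_lt.1 fun hlt => hinv ⟨ht, hlt⟩)
      (ht.length_mul_right_ne x).symm⟩

lemma leLk.refl (x : W) : leLk cs k x x :=
  Relation.ReflTransGen.refl

lemma leLk.trans (hxy : leLk cs k x y) (hyz : leLk cs k y z) : leLk cs k x z :=
  Relation.ReflTransGen.trans hxy hyz

lemma leLk.mono (hkl : k ≤ l) (hxy : leLk cs k x y) : leLk cs l x y := by
  refine Relation.ReflTransGen.mono ?_ _ _ hxy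
  rintro u _ ⟨t, ⟨ht, htk⟩, hstep⟩
  exact ⟨t, ⟨ht, by omega⟩, hstep⟩

lemma leLk.eq_or_length_lt (hxy : leLk cs k x y) : x = y ∨ cs.length x < cs.length y := by
  induction hxy with
  | refl => exact Or.inl rfl
  | tail _ hstep ih =>
    obtain ⟨_, _, _, hlt⟩ := hstep
    exact Or.inr (ih.elim (fun h => h ▸ hlt) hlt.trans')

lemma leLk.antisymm (hxy : leLk cs k x y) (hyx : leLk cs l y x) : x = y := by
  have h1 := hxy.eq_or_length_lt
  have h2 := hyx.eq_or_length_lt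
  grind

lemma leLk_mul (ht : cs.IsReflection t) (htk : cs.length t ≤ 2 * k + 1)
    (hinv : ¬cs.IsLeftInversion x t) : leLk cs k x (t * x) :=
  Relation.ReflTransGen.single (step_TkSet_iff.2 ⟨t, ht, htk, hinv, rfl⟩)

lemma leLk_simple_mul (hx : ¬cs.IsLeftDescent x p) : leLk cs k x (cs.simple p * x) :=
  leLk_mul (cs.isReflection_simple p) (by simp)
    ((cs.isLeftInversion_simple_iff_isLeftDescent x p).not.2 hx)

lemma simple_mul_leLk (hx : cs.IsLeftDescent x p) : leLk cs k (cs.simple p * x) x := by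
  simpa using leLk_simple_mul (k := k) (cs.isLeftDescent_iff_not_isLeftDescent_mul.1 hx)

lemma length_simple_conj_le (t : W) (p : B) :
    cs.length (cs.simple p * t * (cs.simple p)⁻¹) ≤ cs.length t + 2 := by
  have hleft := cs.length_mul_le (cs.simple p) t
  have hright := cs.length_mul_le (cs.simple p * t) (cs.simple p)⁻¹
  simp only [cs.inv_simple, cs.length_simple] at hleft hright ⊢
  omega

lemma simple_mul_leLk_simple_mul_mul (ht : cs.IsReflection t)
    (htk : cs.length (cs.simple p * t * (cs.simple p)⁻¹) ≤ 2 * k + 1) (hp : t ≠ cs.simple p)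
    (hinv : ¬cs.IsLeftInversion x t) :
    leLk cs k (cs.simple p * x) (cs.simple p * (t * x)) := by
  have hle := leLk_mul (ht.conj (cs.simple p)) htk
    ((isLeftInversion_simple_mul_iff ht hp).not.2 hinv)
  rwa [show cs.simple p * t * (cs.simple p)⁻¹ * (cs.simple p * x) = cs.simple p * (t * x) by
    group] at hle

lemma leLk.simple_mul_of_not_isLeftDescent (hxy : leLk cs k x y) (hy : ¬cs.IsLeftDescent y p) :
    leLk cs (k + 1) (cs.simple p * x) (cs.simple p * y) := by
  induction hxy using Relation.ReflTransGen.head_induction_on with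
  | refl => exact leLk.refl _
  | @head x z hstep hzy ih =>
    obtain ⟨t, ht, htk, hinv, rfl⟩ := step_TkSet_iff.1 hstep
    obtain rfl | hp := eq_or_ne t (cs.simple p)
    · exact (leLk.mono k.le_succ hzy).trans (leLk_simple_mul hy)
    · have hconj := length_simple_conj_le (cs := cs) t p
      exact (simple_mul_leLk_simple_mul_mul ht (by omega) hp hinv).trans ih

lemma leLk.simple_mul_of_isLeftDescent (hxy : leLk cs k x y) (hx : cs.IsLeftDescent x p) :
    leLk cs (k + 1) (cs.simple p * x) (cs.simple p * y) := by
  induction hxy with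
  | refl => exact leLk.refl _
  | tail hxz hstep ih =>
    obtain ⟨t, ht, htk, hinv, rfl⟩ := step_TkSet_iff.1 hstep
    obtain rfl | hp := eq_or_ne t (cs.simple p)
    · rw [cs.simple_mul_simple_cancel_left]
      exact (simple_mul_leLk hx).trans (leLk.mono k.le_succ hxz)
    · have hconj := length_simple_conj_le (cs := cs) t p
      exact ih.trans (simple_mul_leLk_simple_mul_mul ht (by omega) hp hinv)

lemma leLk.of_simple_mul (hxy : leLk cs k (cs.simple p * x) (cs.simple p * y))
    (hdesc : cs.IsLeftDescent x p → cs.IsLeftDescent y p) : leLk cs (k + 1) x y := by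
  by_cases hx : cs.IsLeftDescent x p
  · simpa using hxy.simple_mul_of_not_isLeftDescent
      (cs.isLeftDescent_iff_not_isLeftDescent_mul.1 (hdesc hx))
  by_cases hy : cs.IsLeftDescent y p
  · exact (leLk_simple_mul hx).trans ((hxy.mono k.le_succ).trans (simple_mul_leLk hy))
  · have hpx : cs.IsLeftDescent (cs.simple p * x) p := by
      rwa [cs.isLeftDescent_iff_not_isLeftDescent_mul, cs.simple_mul_simple_cancel_left]
    simpa using hxy.simple_mul_of_isLeftDescent hpx

lemma leLk_mul_mul_simple_of_simple_mul_eq (ht : cs.IsReflection t)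
    (htk : cs.length (cs.simple p * t * (cs.simple p)⁻¹) ≤ 2 * k + 1) (hp : t ≠ cs.simple p)
    (hinv : ¬cs.IsLeftInversion a t) (ha : ¬cs.IsRightDescent a i)
    (hdesc : cs.IsLeftDescent (t * a * cs.simple i) p)
    (hpa : cs.simple p * a = a * cs.simple i) : leLk cs k a (t * a * cs.simple i) := by
  have hinv' : ¬cs.IsLeftInversion a (cs.simple p * t * (cs.simple p)⁻¹) := fun h => by
    refine hinv ((isLeftInversion_simple_mul_iff ht hp).1 ?_)
    rw [hpa]
    exact isLeftInversion_mul_simple ha h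
  have hmul : cs.simple p * t * (cs.simple p)⁻¹ * a = cs.simple p * (t * a * cs.simple i) := by
    rw [mul_assoc t, ← hpa, cs.inv_simple]
    group
  exact (hmul ▸ leLk_mul (ht.conj _) htk hinv').trans (simple_mul_leLk hdesc)

theorem leLk_mul_mul_simple (ht : cs.IsReflection t) (htk : cs.length t ≤ 2 * k + 1)
    (hinv : ¬cs.IsLeftInversion a t) (ha : ¬cs.IsRightDescent a i)
    (hta : cs.IsRightDescent (t * a) i) : leLk cs k a (t * a * cs.simple i) := by
  induction k using Nat.strong_induction_on generalizing t a with
  | _ k ih =>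
    by_cases hne : t * a = a * cs.simple i
    · rw [hne, cs.simple_mul_simple_cancel_right]
      exact leLk.refl a
    obtain ⟨p, hp⟩ := cs.exists_leftDescent_of_ne_one (w := t)
      (by rintro rfl; simpa using ht.odd_length)
    have htp : t ≠ cs.simple p := by
      rintro rfl
      exact ha ((isRightDescent_simple_mul_iff hne).1 hta)
    have hlen := length_simple_conj_add_two ht hp htp
    have hdesc : cs.IsLeftDescent (a * cs.simple i) p → cs.IsLeftDescent (t * a * cs.simple i) p :=
      fun h => mul_assoc t a _ ▸
        isLeftDescent_mul ht hp h ((isLeftInversion_mul_simple_iff hne).not.2 hinv)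
    by_cases hpa : cs.simple p * a = a * cs.simple i
    · refine leLk_mul_mul_simple_of_simple_mul_eq ht (by omega) htp hinv ha (hdesc ?_) hpa
      rw [CoxeterSystem.IsLeftDescent, ← hpa, cs.simple_mul_simple_cancel_left, hpa]
      have := cs.not_isRightDescent_iff.1 ha
      omega
    by_cases hpta : cs.simple p * (t * a) = t * a * cs.simple i
    · have hap : ¬cs.IsLeftDescent a p := fun h => by
        have hlt := hdesc (isLeftDescent_mul_simple ha h)
        rw [CoxeterSystem.IsLeftDescent, ← hpta, cs.simple_mul_simple_cancel_left, hpta] at hlt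
        exact hlt.not_gt hta
      exact hpta ▸ (leLk_simple_mul hap).trans
        (simple_mul_leLk_simple_mul_mul ht (by omega) htp hinv)
    have hodd := (ht.conj (cs.simple p)).odd_length.pos
    obtain ⟨l, rfl⟩ : ∃ l, k = l + 1 := Nat.exists_eq_add_one.2 (by omega)
    have hmul : cs.simple p * t * (cs.simple p)⁻¹ * (cs.simple p * a) = cs.simple p * (t * a) := by
      group
    have hle := ih l l.lt_succ_self (ht.conj (cs.simple p)) (by omega)
      ((isLeftInversion_simple_mul_iff ht htp).not.2 hinv)
      ((isRightDescent_simple_mul_iff hpa).not.2 ha)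
      (hmul ▸ (isRightDescent_simple_mul_iff hpta).2 hta)
    rw [hmul, mul_assoc (cs.simple p)] at hle
    exact hle.of_simple_mul fun h => hdesc (isLeftDescent_mul_simple ha h)

theorem leLk.mul_simple (hav : leLk cs k a v) (ha : ¬cs.IsRightDescent a i)
    (hv : cs.IsRightDescent v i) : leLk cs k a (v * cs.simple i) := by
  induction hav with
  | refl => exact absurd hv ha
  | @tail y _ hay hstep ih =>
    obtain ⟨t, ht, htk, hinv, rfl⟩ := step_TkSet_iff.1 hstep
    by_cases hy : cs.IsRightDescent y i
    · refine leLk.trans (ih hy) ?_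
      rw [mul_assoc]
      refine leLk_mul ht htk fun h => hinv ?_
      simpa using isLeftInversion_mul_simple (cs.isRightDescent_iff_not_isRightDescent_mul.1 hy) h
    · exact leLk.trans hay (leLk_mul_mul_simple ht htk hinv hy hv)

end IntermediateOrder

section ParabolicProjection

variable {B : Type*} {W : Type*} [Group W] {M : CoxeterMatrix B} {cs : CoxeterSystem M W}
variable {K : Set B} {k : ℕ} {a b u v : W}

/-- The standard parabolic subgroup `W_K`, indexed by a set `K` of Coxeter generators. -/
def parabolicSubgroup (cs : CoxeterSystem M W) (K : Set B) : Subgroup W :=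
  Subgroup.closure (cs.simple '' K)

/-- `a` is the parabolic projection of `u`, that is, an element of the coset `u W_K` without
right descents in `K`. -/
structure IsParabolicProj (cs : CoxeterSystem M W) (K : Set B) (u a : W) : Prop where
  not_isRightDescent : ∀ i ∈ K, ¬cs.IsRightDescent a i
  inv_mul_mem : a⁻¹ * u ∈ parabolicSubgroup cs K

lemma simple_mem_parabolicSubgroup {i : B} (hi : i ∈ K) :
    cs.simple i ∈ parabolicSubgroup cs K :=
  Subgroup.subset_closure ⟨i, hi, rfl⟩

lemma IsParabolicProj.congr (h : IsParabolicProj cs K u a)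
    (huv : u⁻¹ * v ∈ parabolicSubgroup cs K) : IsParabolicProj cs K v a :=
  ⟨h.not_isRightDescent, by simpa [mul_assoc] using mul_mem h.inv_mul_mem huv⟩

lemma IsParabolicProj.mul_simple {i : B} (h : IsParabolicProj cs K u a) (hi : i ∈ K) :
    IsParabolicProj cs K (u * cs.simple i) a :=
  h.congr (by simpa using simple_mem_parabolicSubgroup hi)

lemma isParabolicProj_self (ha : ∀ i ∈ K, ¬cs.IsRightDescent a i) : IsParabolicProj cs K a a :=
  ⟨ha, by simp⟩

theorem parabolic_descent_induction (K : Set B) {motive : W → Prop}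
    (minimal : ∀ u, (∀ i ∈ K, ¬cs.IsRightDescent u i) → motive u)
    (descent : ∀ u, ∀ i ∈ K, cs.IsRightDescent u i → motive (u * cs.simple i) → motive u)
    (u : W) : motive u := by
  induction hu : cs.length u using Nat.strong_induction_on generalizing u with
  | _ n ih =>
    by_cases! h : ∀ i ∈ K, ¬cs.IsRightDescent u i
    · exact minimal u h
    · obtain ⟨i, hi, hui⟩ := h
      exact descent u i hi hui (ih _ (hu ▸ hui) _ rfl)

lemma exists_isParabolicProj (cs : CoxeterSystem M W) (K : Set B) (u : W) :
    ∃ a, IsParabolicProj cs K u a ∧ ∀ t, cs.IsLeftInversion a t → cs.IsLeftInversion u t := by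
  induction u using parabolic_descent_induction (cs := cs) K with
  | minimal u hu => exact ⟨u, isParabolicProj_self hu, fun _ => id⟩
  | descent u i hi hui ih =>
    obtain ⟨a, hproj, hinv⟩ := ih
    refine ⟨a, by simpa using hproj.mul_simple hi, fun t ht => ?_⟩
    simpa using isLeftInversion_mul_simple
      (cs.isRightDescent_iff_not_isRightDescent_mul.1 hui) (hinv t ht)

lemma exists_leLk_mul_simple {i : B} (hv : ¬cs.IsRightDescent v i) :
    ∃ k, leLk cs k v (v * cs.simple i) := by
  have hinv : ¬cs.IsLeftInversion v (v * cs.simple i * v⁻¹) := fun h =>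
    hv (by simpa [CoxeterSystem.IsRightDescent] using h.2)
  have hle := leLk_mul (k := cs.length (v * cs.simple i * v⁻¹))
    ((cs.isReflection_simple i).conj v) (by omega) hinv
  rw [inv_mul_cancel_right] at hle
  exact ⟨_, hle⟩

lemma exists_leLk_mul_of_mem_parabolicSubgroup (ha : ∀ i ∈ K, ¬cs.IsRightDescent a i) {y : W}
    (hy : y ∈ parabolicSubgroup cs K) : ∃ k, leLk cs k a (a * y) := by
  have hstep (v : W) (i : B) (hi : i ∈ K) (h : ∃ k, leLk cs k a v) :
      ∃ k, leLk cs k a (v * cs.simple i) := by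
    obtain ⟨k, hk⟩ := h
    by_cases hv : cs.IsRightDescent v i
    · exact ⟨k, hk.mul_simple (ha i hi) hv⟩
    · obtain ⟨l, hl⟩ := exists_leLk_mul_simple hv
      exact ⟨max k l, (hk.mono (le_max_left k l)).trans (hl.mono (le_max_right k l))⟩
  induction hy using Subgroup.closure_induction_right with
  | one => exact ⟨0, by simpa using leLk.refl a⟩
  | mul_right y _ s hs ih =>
    obtain ⟨i, hi, rfl⟩ := hs
    simpa [mul_assoc] using hstep _ i hi ih
  | mul_inv_cancel y _ s hs ih =>
    obtain ⟨i, hi, rfl⟩ := hs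
    simpa [mul_assoc] using hstep _ i hi ih

theorem IsParabolicProj.unique (ha : IsParabolicProj cs K u a) (hb : IsParabolicProj cs K u b) :
    a = b := by
  have hab : a⁻¹ * b ∈ parabolicSubgroup cs K := by
    simpa [mul_assoc] using mul_mem ha.inv_mul_mem (inv_mem hb.inv_mul_mem)
  obtain ⟨k, hk⟩ := exists_leLk_mul_of_mem_parabolicSubgroup ha.not_isRightDescent hab
  obtain ⟨l, hl⟩ := exists_leLk_mul_of_mem_parabolicSubgroup hb.not_isRightDescent (inv_mem hab)
  simp only [mul_inv_rev, inv_inv, mul_inv_cancel_left] at hk hl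
  exact hk.antisymm hl

lemma leLk.of_isParabolicProj (hav : leLk cs k a v) (ha : ∀ i ∈ K, ¬cs.IsRightDescent a i)
    (hb : IsParabolicProj cs K v b) : leLk cs k a b := by
  induction v using parabolic_descent_induction (cs := cs) K with
  | minimal v hv => rwa [hb.unique (isParabolicProj_self hv)]
  | descent v i hi hvi ih => exact ih (hav.mul_simple (ha i hi) hvi) (hb.mul_simple hi)

theorem leLk.isParabolicProj_mono (huv : leLk cs k u v) (ha : IsParabolicProj cs K u a)
    (hb : IsParabolicProj cs K v b) : leLk cs k a b := by
  induction huv generalizing b with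
  | refl => exact ha.unique hb ▸ leLk.refl a
  | @tail y _ _ hstep ih =>
    obtain ⟨t, ht, htk, hinv, rfl⟩ := step_TkSet_iff.1 hstep
    obtain ⟨c, hc, hcy⟩ := exists_isParabolicProj cs K y
    have hctc : leLk cs k c (t * c) := leLk_mul ht htk fun h => hinv (hcy t h)
    have hcb : IsParabolicProj cs K (t * c) b :=
      hb.congr (by simpa [mul_assoc] using inv_mem hc.inv_mul_mem)
    exact (ih hc).trans (hctc.of_isParabolicProj hc.not_isRightDescent hcb)

lemma PFactor.isParabolicProj {y : W} (h : PFactor cs.length (cs.simple '' K) u a y) :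
    IsParabolicProj cs K u a := by
  obtain ⟨hy, ha, rfl, -⟩ := h
  exact ⟨fun i hi hai => hai.not_gt (ha _ ⟨i, hi, rfl⟩), by simpa [parabolicSubgroup] using hy⟩

end ParabolicProjection

end KBruhatPaper

/-- for any `J ⊆ S` and `k ∈ ℕ`, the parabolic projection `P^J` is
order preserving on `(W, ≤_{L^k})`. -/
theorem stmt_9 {B W : Type*} [Group W] {M : CoxeterMatrix B} (cs : CoxeterSystem M W)
    {J : Set W} (hJ : J ⊆ Set.range cs.simple) (k : ℕ) :
    ∀ u v uup uJ vup vJ : W,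
      PFactor cs.length J u uup uJ → PFactor cs.length J v vup vJ →
      leLk cs k u v → leLk cs k uup vup := by
  obtain ⟨K, rfl⟩ := Set.subset_range_iff_exists_image_eq.1 hJ
  intro u v uup uJ vup vJ hu hv huv
  exact huv.isParabolicProj_mono hu.isParabolicProj hv.isParabolicProj
end

section
/- Let (W,S) be a Coxeter system, s ∈ S and t ∈ T with s < t in the Bruhat order. Then s ⊑ t. Consequently, if X ⊆ T is an order ideal of (T, ⊑) and t ∈ X, then s ∈ X (so s ∈ S ∩ X). -/
open KBruhatPaper

/-!
The reflections occurring an odd number of times in the left inversion sequence of a word depend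
only on the product `w` of the word, and they are exactly the left inversions of `w`. This yields
the strong exchange property, and with it the subword property: if `s ≤ t`, then every word for `t`
contains the letter `s`.

Induct on `ℓ(t)`. A left descent `r ≠ t` of the reflection `t` satisfies `ℓ(r t r) < ℓ(t r) < ℓ(t)`,
and `⟨r, t⟩` has exactly two canonical generators, so `r ⊑' t` and `r t r ⊑' t`, both through `t r`.
If `r = s` this is the claim; otherwise every word for `r t r` still contains `s`.
-/

namespace KBruhatPaper

variable {B W : Type*} [Group W] {M : CoxeterMatrix B}

section InversionParity

open CoxeterSystem

theorem prod_map_reverse_alternatingWord {G : Type*} [Monoid G] (f : B → G) (i j : B) (m : ℕ) :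
    ((alternatingWord i j (2 * m)).reverse.map f).prod = (f j * f i) ^ m := by
  induction m with
  | zero => simp [alternatingWord]
  | succ m ih =>
    rw [show 2 * (m + 1) = 2 * m + 1 + 1 by ring, alternatingWord_succ', alternatingWord_succ']
    simp only [even_two, Even.mul_right, Nat.even_add_one, not_true_eq_false, if_true, if_false,
      List.reverse_cons, List.map_append, List.prod_append, List.map_singleton, List.prod_singleton,
      ih, pow_succ, mul_assoc]

variable (cs : CoxeterSystem M W)

theorem drop_leftInvSeq_alternatingWord (i j : B) :
    (cs.leftInvSeq (alternatingWord i j (2 * M i j))).drop (M i j) =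
      (cs.leftInvSeq (alternatingWord i j (2 * M i j))).take (M i j) := by
  refine List.ext_getElem ?_ fun k hk _ => ?_
  · simp only [List.length_drop, List.length_take, length_leftInvSeq, length_alternatingWord]
    lia
  have hk : k < M i j := by
    simp only [List.length_drop, length_leftInvSeq, length_alternatingWord] at hk
    lia
  rw [List.getElem_drop, List.getElem_take,
    cs.getElem_leftInvSeq_alternatingWord i j _ _ (by lia),
    cs.getElem_leftInvSeq_alternatingWord i j _ _ (by lia)]
  have half (n : ℕ) : (2 * n + 1) / 2 = n := by lia
  simp [prod_alternatingWord_eq_mul_pow, half, pow_add]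

variable [DecidableEq W]

/-- The action of a simple reflection `s` on signed group elements: `x` is conjugated by `s`, and
its sign, encoded in `ZMod 2`, flips exactly when `x = s`. On signed reflections this is the action
of `s` on the roots of `W`. -/
def signedConj (i : B) : Function.End (W × ZMod 2) := fun p =>
  (cs.simple i * p.1 * cs.simple i, p.2 + if p.1 = cs.simple i then 1 else 0)

theorem signedConj_smul (i : B) (p : W × ZMod 2) :
    signedConj cs i • p =
      (cs.simple i * p.1 * cs.simple i, p.2 + if p.1 = cs.simple i then 1 else 0) := rfl

theorem prod_map_signedConj_smul (ω : List B) (p : W × ZMod 2) :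
    (ω.map (signedConj cs)).prod • p =
      (cs.wordProd ω * p.1 * (cs.wordProd ω)⁻¹, p.2 + (cs.rightInvSeq ω).count p.1) := by
  induction ω with
  | nil => simp
  | cons i ω ih =>
    have conj_eq_iff : cs.wordProd ω * p.1 * (cs.wordProd ω)⁻¹ = cs.simple i ↔
        (cs.wordProd ω)⁻¹ * cs.simple i * cs.wordProd ω = p.1 := by
      rw [mul_inv_eq_iff_eq_mul, mul_assoc, inv_mul_eq_iff_eq_mul, eq_comm]
    rw [List.map_cons, List.prod_cons, mul_smul, ih, signedConj_smul]
    simp only [conj_eq_iff]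
    simp [rightInvSeq, wordProd_cons, List.count_cons, mul_assoc, add_assoc]

theorem prod_map_signedConj_reverse_smul (ω : List B) (p : W × ZMod 2) :
    (ω.reverse.map (signedConj cs)).prod • p =
      ((cs.wordProd ω)⁻¹ * p.1 * cs.wordProd ω, p.2 + (cs.leftInvSeq ω).count p.1) := by
  rw [prod_map_signedConj_smul, wordProd_reverse, rightInvSeq_reverse, List.count_reverse, inv_inv]

theorem even_count_leftInvSeq_alternatingWord (i j : B) (x : W) :
    Even ((cs.leftInvSeq (alternatingWord i j (2 * M i j))).count x) := by
  rw [← List.take_append_drop (M i j) (cs.leftInvSeq _), List.count_append,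
    drop_leftInvSeq_alternatingWord]
  exact Even.add_self _

theorem isLiftable_signedConj : M.IsLiftable (signedConj cs) := by
  intro i j
  refine eq_of_smul_eq_smul fun p : W × ZMod 2 => ?_
  have count_eq_zero : ((cs.leftInvSeq (alternatingWord j i (2 * M j i))).count p.1 : ZMod 2) = 0 :=
    (ZMod.natCast_eq_zero_iff_even).2 (even_count_leftInvSeq_alternatingWord cs j i p.1)
  rw [← prod_map_reverse_alternatingWord, M.symmetric i j, prod_map_signedConj_reverse_smul,
    count_eq_zero]
  simp [prod_alternatingWord_eq_mul_pow]

/-- The parity of the number of occurrences of `x` in the left inversion sequence of any word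
for `w`. -/
def inversionParity (w x : W) : ZMod 2 :=
  (cs.lift ⟨signedConj cs, isLiftable_signedConj cs⟩ w⁻¹ • (x, (0 : ZMod 2))).2

theorem lift_signedConj_inv_wordProd_smul (ω : List B) (p : W × ZMod 2) :
    cs.lift ⟨signedConj cs, isLiftable_signedConj cs⟩ (cs.wordProd ω)⁻¹ • p =
      ((cs.wordProd ω)⁻¹ * p.1 * cs.wordProd ω, p.2 + (cs.leftInvSeq ω).count p.1) := by
  have lift_comp_simple :
      cs.lift ⟨signedConj cs, isLiftable_signedConj cs⟩ ∘ cs.simple = signedConj cs :=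
    funext (cs.lift_apply_simple (isLiftable_signedConj cs))
  rw [← prod_map_signedConj_reverse_smul, ← wordProd_reverse, wordProd, map_list_prod,
    List.map_map, lift_comp_simple]

theorem inversionParity_wordProd (ω : List B) (x : W) :
    inversionParity cs (cs.wordProd ω) x = (cs.leftInvSeq ω).count x := by
  rw [inversionParity, lift_signedConj_inv_wordProd_smul, zero_add]

theorem inversionParity_mul (v w x : W) :
    inversionParity cs (v * w) x =
      inversionParity cs v x + inversionParity cs w (v⁻¹ * x * v) := by
  obtain ⟨ω, rfl⟩ := cs.wordProd_surjective v
  obtain ⟨ω', rfl⟩ := cs.wordProd_surjective w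
  rw [inversionParity_wordProd, inversionParity_wordProd, inversionParity, mul_inv_rev, map_mul,
    mul_smul, lift_signedConj_inv_wordProd_smul, lift_signedConj_inv_wordProd_smul,
    zero_add]

theorem inversionParity_one (x : W) : inversionParity cs 1 x = 0 := by
  simpa using inversionParity_wordProd cs [] x

theorem inversionParity_simple (i : B) (x : W) :
    inversionParity cs (cs.simple i) x = if x = cs.simple i then 1 else 0 := by
  rw [← wordProd_singleton, inversionParity_wordProd, leftInvSeq_singleton, List.count_singleton]
  simp [eq_comm (a := x)]

variable {cs}

theorem inversionParity_of_commute {t x : W} (ht : cs.IsReflection t) (hx : Commute t x) :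
    inversionParity cs t x = if x = t then 1 else 0 := by
  obtain ⟨w, i, rfl⟩ := ht
  have conj_eq : (w * cs.simple i)⁻¹ * x * (w * cs.simple i) = w⁻¹ * x * w := by
    calc (w * cs.simple i)⁻¹ * x * (w * cs.simple i)
        = (w * cs.simple i)⁻¹ * (x * (w * cs.simple i * w⁻¹)) * w := by group
      _ = (w * cs.simple i)⁻¹ * (w * cs.simple i * w⁻¹ * x) * w := by rw [hx.eq]
      _ = w⁻¹ * x * w := by group
  have conj_eq_simple_iff : w⁻¹ * x * w = cs.simple i ↔ x = w * cs.simple i * w⁻¹ := by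
    rw [mul_assoc, inv_mul_eq_iff_eq_mul, eq_mul_inv_iff_mul_eq]
  have cancel : inversionParity cs w x + inversionParity cs w⁻¹ (w⁻¹ * x * w) = 0 := by
    rw [← inversionParity_mul, mul_inv_cancel, inversionParity_one]
  rw [inversionParity_mul, inversionParity_mul, conj_eq, inversionParity_simple, add_right_comm,
    cancel, zero_add]
  simp only [conj_eq_simple_iff]

theorem mem_leftInvSeq_of_inversionParity_ne_zero {ω : List B} {x : W}
    (h : inversionParity cs (cs.wordProd ω) x ≠ 0) : x ∈ cs.leftInvSeq ω := by
  contrapose! h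
  rw [inversionParity_wordProd, List.count_eq_zero_of_not_mem h, Nat.cast_zero]

theorem isLeftInversion_of_inversionParity_ne_zero {w x : W} (h : inversionParity cs w x ≠ 0) :
    cs.IsLeftInversion w x := by
  obtain ⟨ω, hω, rfl⟩ := cs.exists_isReduced w
  exact cs.isLeftInversion_of_mem_leftInvSeq hω (mem_leftInvSeq_of_inversionParity_ne_zero h)

theorem inversionParity_ne_zero_iff {w x : W} :
    inversionParity cs w x ≠ 0 ↔ cs.IsLeftInversion w x := by
  refine ⟨isLeftInversion_of_inversionParity_ne_zero, fun h parity_eq_zero => ?_⟩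
  refine h.1.not_isLeftInversion_mul_right_iff.2 h (isLeftInversion_of_inversionParity_ne_zero ?_)
  rw [inversionParity_mul, inv_mul_cancel, one_mul, parity_eq_zero,
    inversionParity_of_commute h.1 (Commute.refl x)]
  simp

end InversionParity

section Exchange

variable {cs : CoxeterSystem M W}

theorem mem_leftInvSeq_of_isLeftInversion {ω : List B} {t : W}
    (h : cs.IsLeftInversion (cs.wordProd ω) t) : t ∈ cs.leftInvSeq ω := by
  classical
  exact mem_leftInvSeq_of_inversionParity_ne_zero (inversionParity_ne_zero_iff.2 h)

theorem isLeftInversion_or_of_isLeftInversion_mul {v w t : W} (h : cs.IsLeftInversion (v * w) t) :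
    cs.IsLeftInversion v t ∨ cs.IsLeftInversion w (v⁻¹ * t * v) := by
  classical
  simp only [← inversionParity_ne_zero_iff, inversionParity_mul] at h ⊢
  contrapose! h
  rw [h.1, h.2, add_zero]

theorem eq_of_isLeftInversion_of_commute {t x : W} (ht : cs.IsReflection t)
    (h : cs.IsLeftInversion t x) (hx : Commute t x) : x = t := by
  classical
  rw [← inversionParity_ne_zero_iff, inversionParity_of_commute ht hx] at h
  simpa using h

theorem strong_exchange {ω : List B} {t : W} (h : cs.IsLeftInversion (cs.wordProd ω) t) :
    ∃ k < ω.length, t * cs.wordProd ω = cs.wordProd (ω.eraseIdx k) := by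
  obtain ⟨k, hk, rfl⟩ := List.mem_iff_getElem.1 (mem_leftInvSeq_of_isLeftInversion h)
  refine ⟨k, by simpa using hk, ?_⟩
  rw [← cs.getD_leftInvSeq_mul_wordProd, List.getD_eq_getElem]

variable (cs) in
theorem exists_isReduced_sublist (ω : List B) :
    ∃ ω', ω'.Sublist ω ∧ cs.IsReduced ω' ∧ cs.wordProd ω' = cs.wordProd ω := by
  induction ω with
  | nil => exact ⟨[], List.Sublist.refl _, by simp [CoxeterSystem.IsReduced], rfl⟩
  | cons i ω ih =>
    obtain ⟨ω', hsub, hred, hprod⟩ := ih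
    by_cases hdesc : cs.IsLeftDescent (cs.wordProd ω') i
    · obtain ⟨k, hk, heq⟩ :=
        strong_exchange ((cs.isLeftInversion_simple_iff_isLeftDescent _ i).2 hdesc)
      refine ⟨ω'.eraseIdx k, ((List.eraseIdx_sublist _ _).trans hsub).cons _, ?_, ?_⟩
      · have hlen := cs.isLeftDescent_iff.1 hdesc
        rw [heq, hred.eq, ← List.length_eraseIdx_add_one hk] at hlen
        exact Nat.succ_injective hlen
      · rw [← heq, hprod, cs.wordProd_cons]
    · refine ⟨i :: ω', hsub.cons_cons _, ?_, by rw [cs.wordProd_cons, cs.wordProd_cons, hprod]⟩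
      rw [CoxeterSystem.IsReduced, cs.wordProd_cons, cs.not_isLeftDescent_iff.1 hdesc, hred.eq,
        List.length_cons]

theorem exists_sublist_of_bruhatLE {u v : W} (h : bruhatLE cs u v) {ω : List B}
    (hω : cs.wordProd ω = v) : ∃ ω', ω'.Sublist ω ∧ cs.wordProd ω' = u := by
  unfold bruhatLE leL at h
  induction h using Relation.ReflTransGen.head_induction_on with
  | refl => exact ⟨ω, List.Sublist.refl _, hω⟩
  | @head u _ hstep _ ih =>
    obtain ⟨t, ht, rfl, hlt⟩ := hstep
    obtain ⟨ω', hsub, hprod⟩ := ih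
    have ht : cs.IsReflection t := ht
    have t_mul_t_mul : t * (t * u) = u := by rw [← mul_assoc, ht.mul_self, one_mul]
    obtain ⟨k, -, heq⟩ := strong_exchange (cs := cs) (ω := ω') (t := t)
      ⟨ht, by rwa [hprod, t_mul_t_mul]⟩
    refine ⟨ω'.eraseIdx k, (List.eraseIdx_sublist _ _).trans hsub, ?_⟩
    rw [← heq, hprod, t_mul_t_mul]

theorem isLeftInversion_simple_iff {i : B} {x : W} :
    cs.IsLeftInversion (cs.simple i) x ↔ x = cs.simple i := by
  classical
  simp [← inversionParity_ne_zero_iff, inversionParity_simple]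

theorem isReflection_simple_mul_mul_simple {t : W} (ht : cs.IsReflection t) (i : B) :
    cs.IsReflection (cs.simple i * t * cs.simple i) := by
  simpa using ht.conj (cs.simple i)

theorem length_mul_simple_eq_length_simple_mul {t : W} (ht : cs.IsReflection t) (i : B) :
    cs.length (t * cs.simple i) = cs.length (cs.simple i * t) := by
  rw [← cs.length_inv, mul_inv_rev, ht.inv, cs.inv_simple]

theorem length_simple_mul_mul_simple_lt {t : W} {i : B} (ht : cs.IsReflection t)
    (hi : cs.IsLeftDescent t i) (hne : cs.simple i ≠ t) :
    cs.length (cs.simple i * t * cs.simple i) < cs.length (t * cs.simple i) := by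
  have hinv : cs.IsLeftInversion (t * cs.simple i * cs.simple i) (cs.simple i) := by
    rwa [cs.simple_mul_simple_cancel_right, cs.isLeftInversion_simple_iff_isLeftDescent]
  rcases isLeftInversion_or_of_isLeftInversion_mul hinv with h | h
  · simpa [mul_assoc] using h.2
  · -- The simple reflection commutes with `t`, hence equals `t`.
    refine absurd (eq_of_isLeftInversion_of_commute ht
      ((cs.isLeftInversion_simple_iff_isLeftDescent t i).2 hi) ?_) hne
    have hconj := isLeftInversion_simple_iff.1 h
    rw [mul_assoc, inv_mul_eq_iff_eq_mul, mul_assoc, cs.simple_mul_simple_self, mul_one,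
      ← mul_assoc] at hconj
    exact (mul_right_cancel (hconj.trans (cs.simple_mul_simple_cancel_right i).symm)).symm

end Exchange

section Dihedral

variable {G : Type*} [Group G] {r q : G}

theorem mul_mul_zpow_eq_zpow_neg_mul (hr : r * r = 1) (hq : q * q = 1) (k : ℤ) :
    r * (r * q) ^ k = (r * q) ^ (-k) * r := by
  have semiconj : SemiconjBy r (r * q) (r * q)⁻¹ := by
    rw [SemiconjBy, mul_inv_rev, inv_mul_cancel_right, ← mul_assoc, hr, one_mul,
      inv_eq_of_mul_eq_one_left hq]
  rw [zpow_neg, ← inv_zpow]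
  exact semiconj.zpow_right k

theorem exists_zpow_of_mem_closure_pair (hr : r * r = 1) (hq : q * q = 1) {x : G}
    (hx : x ∈ Subgroup.closure {r, q}) : ∃ k : ℤ, x = (r * q) ^ k ∨ x = r * (r * q) ^ k := by
  have generator_mul (y : G) (hy : y ∈ ({r, q} : Set G)) (x : G)
      (h : ∃ k : ℤ, x = (r * q) ^ k ∨ x = r * (r * q) ^ k) :
      ∃ k : ℤ, y * x = (r * q) ^ k ∨ y * x = r * (r * q) ^ k := by
    obtain ⟨k, rfl | rfl⟩ := h <;> obtain rfl | rfl := hy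
    · exact ⟨k, Or.inr rfl⟩
    · refine ⟨k + 1, Or.inr ?_⟩
      rw [add_comm, zpow_add, zpow_one, mul_assoc, ← mul_assoc r r, hr, one_mul]
    · exact ⟨k, Or.inl (by rw [← mul_assoc, hr, one_mul])⟩
    · refine ⟨k - 1, Or.inl ?_⟩
      rw [sub_eq_neg_add, zpow_add, zpow_neg_one, mul_inv_rev, inv_eq_of_mul_eq_one_left hq,
        inv_eq_of_mul_eq_one_left hr, mul_assoc]
  induction hx using Subgroup.closure_induction_left with
  | one => exact ⟨0, Or.inl (zpow_zero _).symm⟩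
  | mul_left y hy x _ ih => exact generator_mul y hy x ih
  | inv_mul_cancel y hy x _ ih =>
    have inv_eq : y⁻¹ = y := by
      obtain rfl | rfl := hy
      exacts [inv_eq_of_mul_eq_one_left hr, inv_eq_of_mul_eq_one_left hq]
    rw [inv_eq]
    exact generator_mul y hy x ih

end Dihedral

section DihedralReflections

variable {cs : CoxeterSystem M W} {r q : W}

theorem isReflection_mul_zpow (hr : cs.IsReflection r) (hq : cs.IsReflection q) (k : ℤ) :
    cs.IsReflection (r * (r * q) ^ k) := by
  have hrot := mul_mul_zpow_eq_zpow_neg_mul hr.mul_self hq.mul_self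
  obtain ⟨l, rfl⟩ | ⟨l, rfl⟩ := k.even_or_odd
  · have conj_eq : r * (r * q) ^ (l + l) = (r * q) ^ (-l) * r * ((r * q) ^ (-l))⁻¹ := by
      rw [zpow_add, ← mul_assoc, hrot, zpow_neg, inv_inv]
    exact conj_eq ▸ hr.conj _
  · have conj_eq : r * (r * q) ^ (2 * l + 1) = (r * q) ^ (-l) * q * ((r * q) ^ (-l))⁻¹ := by
      rw [two_mul, add_assoc, add_comm l 1, zpow_add, ← mul_assoc, hrot, zpow_neg, inv_inv,
        zpow_one_add, mul_assoc, ← mul_assoc r, ← mul_assoc r, hr.mul_self, one_mul, mul_assoc]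
    exact conj_eq ▸ hq.conj _

theorem isReflection_of_mem_closure_pair_of_odd_length (hr : cs.IsReflection r)
    (hq : cs.IsReflection q) {x : W} (hx : x ∈ Subgroup.closure {r, q})
    (hodd : Odd (cs.length x)) : cs.IsReflection x := by
  obtain ⟨k, rfl | rfl⟩ := exists_zpow_of_mem_closure_pair hr.mul_self hq.mul_self hx
  · have hmod := cs.length_mul_mod_two r ((r * q) ^ k)
    have hodd_mul := (isReflection_mul_zpow hr hq k).odd_length
    have hodd_r := hr.odd_length
    grind
  · exact isReflection_mul_zpow hr hq k

theorem isReflection_mul_mul_of_mem_closure_pair (hr : cs.IsReflection r) (hq : cs.IsReflection q)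
    {u v w : W} (hu : cs.IsReflection u) (hv : cs.IsReflection v) (hw : cs.IsReflection w)
    (hu' : u ∈ Subgroup.closure {r, q}) (hv' : v ∈ Subgroup.closure {r, q})
    (hw' : w ∈ Subgroup.closure {r, q}) : cs.IsReflection (u * v * w) := by
  refine isReflection_of_mem_closure_pair_of_odd_length hr hq (mul_mem (mul_mem hu' hv') hw') ?_
  have hmod := cs.length_mul_mod_two (u * v) w
  have hmod' := cs.length_mul_mod_two u v
  have := hu.odd_length
  have := hv.odd_length
  have := hw.odd_length
  grind

end DihedralReflections

section CanonicalGenerators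

variable {cs : CoxeterSystem M W} {W' : Subgroup W}

theorem isLeftInversion_self {t : W} (ht : cs.IsReflection t) : cs.IsLeftInversion t t :=
  ⟨ht, by simpa [ht.mul_self] using ht.odd_length.pos⟩

theorem mem_canGens_iff {u : W} :
    u ∈ CanGens cs.length (TSet cs) W' ↔
      cs.IsReflection u ∧ u ∈ W' ∧ ∀ x ∈ W', cs.IsLeftInversion u x → x = u := by
  constructor
  · rintro ⟨hu, heq⟩
    exact ⟨hu, (heq.ge rfl).2, fun x hx hinv => heq.le ⟨hinv, hx⟩⟩
  · rintro ⟨hu, hmem, huniq⟩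
    refine ⟨hu, Set.Subset.antisymm (fun x hx => huniq x hx.2 hx.1) ?_⟩
    rintro _ rfl
    exact ⟨isLeftInversion_self hu, hmem⟩

theorem simple_mem_canGens {i : B} (hi : cs.simple i ∈ W') :
    cs.simple i ∈ CanGens cs.length (TSet cs) W' :=
  mem_canGens_iff.2 ⟨cs.isReflection_simple i, hi, fun _ _ => isLeftInversion_simple_iff.1⟩

theorem eq_or_eq_or_eq_of_isReflection_mul_mul {u v w : W}
    (hu : u ∈ CanGens cs.length (TSet cs) W') (hv : v ∈ CanGens cs.length (TSet cs) W')
    (hw : w ∈ CanGens cs.length (TSet cs) W') (h : cs.IsReflection (u * v * w)) :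
    v = w ∨ w = u ∨ u = v := by
  rw [mem_canGens_iff] at hu hv hw
  obtain ⟨hu, hu', hu_uniq⟩ := hu
  obtain ⟨hv, hv', hv_uniq⟩ := hv
  obtain ⟨hw, hw', hw_uniq⟩ := hw
  -- `u v w` is a left inversion of itself, so one of its cyclic rotations `u v w`, `v w u`, `w u v`
  -- is a left inversion of its first factor.
  have hinv := isLeftInversion_self h
  rw [mul_assoc] at hinv
  obtain hinv_u | hinv_vw := isLeftInversion_or_of_isLeftInversion_mul hinv
  · have heq := hu_uniq _ (mul_mem hu' (mul_mem hv' hw')) hinv_u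
    rw [mul_eq_left, mul_eq_one_iff_eq_inv, hw.inv] at heq
    exact Or.inl heq
  · have conj_u : u⁻¹ * (u * (v * w)) * u = v * w * u := by group
    rw [conj_u] at hinv_vw
    obtain hinv_v | hinv_w := isLeftInversion_or_of_isLeftInversion_mul hinv_vw
    · have heq := hv_uniq _ (mul_mem (mul_mem hv' hw') hu') hinv_v
      rw [mul_assoc, mul_eq_left, mul_eq_one_iff_eq_inv, hu.inv] at heq
      exact Or.inr (Or.inl heq)
    · have conj_v : v⁻¹ * (v * w * u) * v = w * (u * v) := by group
      rw [conj_v] at hinv_w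
      have heq := hw_uniq _ (mul_mem hw' (mul_mem hu' hv')) hinv_w
      rw [mul_eq_left, mul_eq_one_iff_eq_inv, hv.inv] at heq
      exact Or.inr (Or.inr heq)

theorem length_lt_or_length_simple_mul_mul_simple_lt {v : W} {i : B} (hv : cs.IsReflection v)
    (hne : v ≠ cs.simple i) :
    cs.length v < cs.length (cs.simple i * v) ∨
      cs.length (cs.simple i * v * cs.simple i) < cs.length (cs.simple i * v) := by
  by_cases hi : cs.IsLeftDescent v i
  · right
    rw [← length_mul_simple_eq_length_simple_mul hv]
    exact length_simple_mul_mul_simple_lt hv hi hne.symm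
  · left
    rw [cs.not_isLeftDescent_iff.1 hi]
    exact Nat.lt_succ_self _

theorem mem_canGens_of_minimal {q : W} {i : B} (hq : cs.IsReflection q) {u : W}
    (hu : cs.IsReflection u) (hu' : u ∈ Subgroup.closure {cs.simple i, q})
    (hmin : ∀ v ∈ Subgroup.closure {cs.simple i, q}, cs.IsReflection v → v ≠ cs.simple i →
      cs.length u ≤ cs.length v) :
    u ∈ CanGens cs.length (TSet cs) (Subgroup.closure {cs.simple i, q}) := by
  refine mem_canGens_iff.2 ⟨hu, hu', fun x hx hinv => ?_⟩
  by_contra hxu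
  -- `v := s x u` is a reflection with `ℓ (s v) < ℓ u`, so `v` or `s v s` is shorter than `u`.
  have hs : cs.simple i ∈ Subgroup.closure {cs.simple i, q} :=
    Subgroup.subset_closure (Set.mem_insert _ _)
  set v := cs.simple i * x * u with hv_def
  have hv : cs.IsReflection v := isReflection_mul_mul_of_mem_closure_pair
    (cs.isReflection_simple i) hq (cs.isReflection_simple i) hinv.1 hu hs hx hu'
  have hv_ne : v ≠ cs.simple i := by
    rwa [hv_def, mul_assoc, Ne, mul_eq_left, mul_eq_one_iff_eq_inv, hu.inv]
  have hv' : v ∈ Subgroup.closure {cs.simple i, q} := mul_mem (mul_mem hs hx) hu'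
  have hlt : cs.length (cs.simple i * v) < cs.length u := by
    rw [hv_def, mul_assoc, cs.simple_mul_simple_cancel_left]
    exact hinv.2
  obtain hlt_v | hlt_conj := length_lt_or_length_simple_mul_mul_simple_lt hv hv_ne
  · exact (hmin v hv' hv hv_ne).not_gt (hlt_v.trans hlt)
  · refine (hmin _ (mul_mem (mul_mem hs hv') hs) ?_ ?_).not_gt (hlt_conj.trans hlt)
    · exact isReflection_simple_mul_mul_simple hv i
    · rwa [Ne, mul_eq_right, mul_eq_one_iff_inv_eq, cs.inv_simple, eq_comm]

theorem encard_canGens_closure_simple_pair {q : W} {i : B} (hq : cs.IsReflection q)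
    (hne : q ≠ cs.simple i) :
    (CanGens cs.length (TSet cs) (Subgroup.closure {cs.simple i, q})).encard = 2 := by
  obtain ⟨u, ⟨hu', hu, hu_ne⟩, hmin⟩ := exists_minimalFor_of_wellFoundedLT
    (fun v => v ∈ Subgroup.closure {cs.simple i, q} ∧ cs.IsReflection v ∧ v ≠ cs.simple i)
    cs.length ⟨q, Subgroup.subset_closure (by simp), hq, hne⟩
  have hs := simple_mem_canGens (cs := cs) (i := i) (W' := Subgroup.closure {cs.simple i, q})
    (Subgroup.subset_closure (Set.mem_insert _ _))
  have hu_gen := mem_canGens_of_minimal hq hu hu'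
    fun v hv' hv hv_ne => (le_total _ _).elim id (hmin ⟨hv', hv, hv_ne⟩)
  suffices heq : CanGens cs.length (TSet cs) (Subgroup.closure {cs.simple i, q}) =
      {cs.simple i, u} by
    rw [heq, Set.encard_pair hu_ne.symm]
  refine Set.Subset.antisymm (fun w hw => ?_) (Set.pair_subset hs hu_gen)
  obtain ⟨hw_refl, hw', -⟩ := mem_canGens_iff.1 hw
  have hprod := isReflection_mul_mul_of_mem_closure_pair (cs.isReflection_simple i) hq
    (cs.isReflection_simple i) hu hw_refl (mem_canGens_iff.1 hs).2.1 hu' hw'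
  obtain rfl | rfl | heq := eq_or_eq_or_eq_of_isReflection_mul_mul hs hu_gen hw hprod
  · exact Or.inr rfl
  · exact Or.inl rfl
  · exact absurd heq.symm hu_ne

end CanonicalGenerators

section TwoStepPaths

variable {cs : CoxeterSystem M W} {t : W} {j : B}

theorem ltL_of_mul_inv_mem {u v : W} (h : u * v⁻¹ ∈ TSet cs) (hlt : cs.length u < cs.length v) :
    ltL cs.length (TSet cs) u v := by
  have h : cs.IsReflection (u * v⁻¹) := h
  refine ⟨Relation.ReflTransGen.single ⟨u * v⁻¹, h, ?_, hlt⟩, fun heq => hlt.ne (heq ▸ rfl)⟩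
  rw [← h.inv, mul_inv_rev, inv_inv, inv_mul_cancel_right]

theorem sqLe'_of_length_lt_of_length_lt {W' : Subgroup W} (hW' : IsReflSubgroup (TSet cs) W')
    (hcard : (CanGens cs.length (TSet cs) W').encard = 2) {p m q : W} (hp : p ∈ W') (hm : m ∈ W')
    (hq : q ∈ W') (hpm : p * m⁻¹ ∈ TSet cs) (hmq : m * q⁻¹ ∈ TSet cs)
    (hlt_pm : cs.length p < cs.length m) (hlt_mq : cs.length m < cs.length q) :
    SqLe' cs.length (TSet cs) p q := by
  refine Or.inr ⟨W', hW', hp, hq, hcard, 2, fun | 0 => p | 1 => m | _ => q, rfl, rfl, ?_, ?_⟩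
  · rintro (_ | _ | _) _
    exacts [hp, hm, hq]
  · intro k hk
    obtain rfl | rfl : k = 0 ∨ k = 1 := by lia
    · exact ⟨hpm, ltL_of_mul_inv_mem hpm hlt_pm⟩
    · exact ⟨hmq, ltL_of_mul_inv_mem hmq hlt_mq⟩

theorem sqLe'_of_length_lt_length_mul_simple (ht : cs.IsReflection t) (hj : cs.IsLeftDescent t j)
    (hne : cs.simple j ≠ t) {p : W} (hp : p ∈ Subgroup.closure {cs.simple j, t})
    (hp_step : cs.IsReflection (p * (t * cs.simple j)⁻¹))
    (hlt : cs.length p < cs.length (t * cs.simple j)) : SqLe' cs.length (TSet cs) p t := by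
  have hs := cs.isReflection_simple j
  have hs_mem : cs.simple j ∈ Subgroup.closure {cs.simple j, t} :=
    Subgroup.subset_closure (Set.mem_insert _ _)
  have ht_mem : t ∈ Subgroup.closure {cs.simple j, t} := Subgroup.subset_closure (by simp)
  have hlt_t : cs.length (t * cs.simple j) < cs.length t :=
    (length_mul_simple_eq_length_simple_mul ht j).trans_lt hj
  exact sqLe'_of_length_lt_of_length_lt ⟨_, Set.pair_subset hs ht, rfl⟩
    (encard_canGens_closure_simple_pair ht hne.symm) hp (mul_mem ht_mem hs_mem) ht_mem hp_step
    (hs.conj t) hlt hlt_t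

theorem sqLe'_simple_mul_mul_simple_of_isLeftDescent (ht : cs.IsReflection t)
    (hj : cs.IsLeftDescent t j) (hne : cs.simple j ≠ t) :
    SqLe' cs.length (TSet cs) (cs.simple j * t * cs.simple j) t := by
  have hs_mem : cs.simple j ∈ Subgroup.closure {cs.simple j, t} :=
    Subgroup.subset_closure (Set.mem_insert _ _)
  refine sqLe'_of_length_lt_length_mul_simple ht hj hne
    (mul_mem (mul_mem hs_mem (Subgroup.subset_closure (by simp))) hs_mem) ?_
    (length_simple_mul_mul_simple_lt ht hj hne)
  rw [mul_assoc (cs.simple j), mul_inv_cancel_right]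
  exact cs.isReflection_simple j

theorem sqLe'_simple_of_isLeftDescent (ht : cs.IsReflection t) (hj : cs.IsLeftDescent t j)
    (hne : cs.simple j ≠ t) : SqLe' cs.length (TSet cs) (cs.simple j) t := by
  refine sqLe'_of_length_lt_length_mul_simple ht hj hne
    (Subgroup.subset_closure (Set.mem_insert _ _)) ?_ ?_
  · rwa [mul_inv_rev, mul_inv_cancel_left, ht.inv]
  · calc cs.length (cs.simple j) = 1 := cs.length_simple j
      _ ≤ cs.length (cs.simple j * t * cs.simple j) :=
          (isReflection_simple_mul_mul_simple ht j).odd_length.pos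
      _ < cs.length (t * cs.simple j) := length_simple_mul_mul_simple_lt ht hj hne

end TwoStepPaths

section Support

variable {cs : CoxeterSystem M W}

/-- The support of `w`: the set of simple reflections that occur in every word for `w`. Since
every word has a reduced subword with the same product, this agrees with the definition by reduced
words. -/
def support (cs : CoxeterSystem M W) (w : W) : Set W :=
  {s | ∀ ω, cs.wordProd ω = w → s ∈ ω.map cs.simple}

theorem simple_mem_support_of_bruhatLE {i : B} {w : W} (h : bruhatLE cs (cs.simple i) w) :
    cs.simple i ∈ support cs w := by
  intro ω hω
  obtain ⟨ω', hsub, hprod⟩ := exists_sublist_of_bruhatLE h hω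
  obtain ⟨ω'', hsub', hred, hprod'⟩ := exists_isReduced_sublist cs ω'
  have hlen : ω''.length = 1 := by rw [← hred.eq, hprod', hprod, cs.length_simple]
  obtain ⟨j, rfl⟩ := List.length_eq_one_iff.1 hlen
  have hj : cs.simple j = cs.simple i := by rw [← cs.wordProd_singleton, hprod', hprod]
  exact List.mem_map.2 ⟨j, (hsub'.trans hsub).subset (List.mem_singleton_self j), hj⟩

theorem mem_support_simple_mul_mul_simple {s t : W} {j : B} (hs : s ∈ support cs t)
    (hne : s ≠ cs.simple j) : s ∈ support cs (cs.simple j * t * cs.simple j) := by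
  intro ω hω
  have hmem := hs (j :: (ω ++ [j])) (by simp [cs.wordProd_cons, cs.wordProd_append, hω, mul_assoc])
  simpa [hne, hne.symm] using hmem

theorem eq_of_mem_support_simple {s : W} {j : B} (hs : s ∈ support cs (cs.simple j)) :
    s = cs.simple j := by
  simpa using hs [j] (cs.wordProd_singleton j)

end Support

theorem sqLe_of_mem_support {cs : CoxeterSystem M W} {s t : W} (ht : cs.IsReflection t)
    (hs : s ∈ support cs t) : SqLe cs.length (TSet cs) s t := by
  induction hn : cs.length t using Nat.strong_induction_on generalizing t with
  | _ n ih =>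
  subst hn
  obtain ⟨j, hj⟩ := cs.exists_leftDescent_of_ne_one (w := t)
    fun h => ht.odd_length.pos.ne' (cs.length_eq_zero_iff.2 h)
  obtain rfl | hjt := eq_or_ne (cs.simple j) t
  · exact Relation.TransGen.single (Or.inl (eq_of_mem_support_simple hs))
  obtain rfl | hsj := eq_or_ne s (cs.simple j)
  · exact Relation.TransGen.single (sqLe'_simple_of_isLeftDescent ht hj hjt)
  have hlt : cs.length (cs.simple j * t * cs.simple j) < cs.length t :=
    calc cs.length (cs.simple j * t * cs.simple j)
        < cs.length (t * cs.simple j) := length_simple_mul_mul_simple_lt ht hj hjt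
      _ = cs.length (cs.simple j * t) := length_mul_simple_eq_length_simple_mul ht j
      _ < cs.length t := hj
  exact (ih _ hlt (isReflection_simple_mul_mul_simple ht j)
    (mem_support_simple_mul_mul_simple hs hsj) rfl).tail
    (sqLe'_simple_mul_mul_simple_of_isLeftDescent ht hj hjt)

end KBruhatPaper

/-- if `s ∈ S`, `t ∈ T` and `s < t` in the Bruhat order, then
`s ⊑ t`; hence any order ideal `X` of `(T, ⊑)` containing `t` contains `s`. -/
theorem stmt_11 {B W : Type*} [Group W] {M : CoxeterMatrix B} (cs : CoxeterSystem M W)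
    (i : B) {t : W} (ht : cs.IsReflection t)
    (hlt : bruhatLT cs (cs.simple i) t) :
    SqLe cs.length (TSet cs) (cs.simple i) t ∧
    ∀ X : Set W, IsIdeal cs.length (TSet cs) X → t ∈ X → cs.simple i ∈ X := by
  have hle : SqLe cs.length (TSet cs) (cs.simple i) t :=
    sqLe_of_mem_support ht (simple_mem_support_of_bruhatLE hlt.1)
  exact ⟨hle, fun X hX htX => hX.2 _ _ hle htX⟩
end
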